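/- arXiv:2201.04514 — 2 statements merged into one kernel-verified Lean document; each statement's English description precedes it below -/
import Mathlib

section
/- (Static central limit theorem for the equilibrium fluctuation field.) Let d ≥ 2 and let h : 𝕋^d × ℝ^d → ℝ be bounded measurable. As ε → 0, the random variable ζ^{ε,eq}(h) under ℙ^eq_ε converges in distribution to a centered Gaussian random variable with variance σ² := ∫_{𝕋^d×ℝ^d} h(z)² 𝓜(v) dz; equivalently, for every ξ ∈ ℝ, 𝔼^eq_ε[ exp( i ξ ζ^{ε,eq}(h) ) ] → exp( −ξ² σ² / 2 ). -/
open MeasureTheory Real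

noncomputable section

/-- The unit `d`-dimensional torus. -/
abbrev Torus (d : ℕ) := Fin d → AddCircle (1 : ℝ)

/-- The one-particle phase space `𝕋^d × ℝ^d`. -/
abbrev Phase (d : ℕ) := Torus d × EuclideanSpace ℝ (Fin d)

/-- The flat (Euclidean) distance on the torus. -/
noncomputable def torusDist {d : ℕ} (x y : Torus d) : ℝ :=
  Real.sqrt (∑ i, dist (x i) (y i) ^ 2)

/-- The Maxwellian `𝓜(v) = (2π)^{-d/2} exp(-|v|²/2)`. -/
noncomputable def maxwellian {d : ℕ} (v : EuclideanSpace ℝ (Fin d)) : ℝ :=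
  (2 * π) ^ (-(d : ℝ) / 2) * Real.exp (-‖v‖ ^ 2 / 2)

/- The hard-sphere exclusion indicator `1_{𝒟^ε_N}` (as a function of the positions). -/
open Classical in
noncomputable def exclInd {d : ℕ} (ε : ℝ) {N : ℕ} (X : Fin N → Torus d) : ℝ :=
  if ∀ i j : Fin N, i ≠ j → ε < torusDist (X i) (X j) then 1 else 0

/-- The Boltzmann–Grad scaling factor `μ_ε = ε^{-(d-1)}`. -/
noncomputable def muBG (d : ℕ) (ε : ℝ) : ℝ := (ε ^ (d - 1))⁻¹

/-- The grand canonical partition function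
`𝒵^ε = ∑_N (μ_ε^N / N!) ∫ ∏_{i≠j} 1_{|x_i - x_j| > ε} dX_N` (the `N = 0` term equals `1`). -/
noncomputable def partitionZ (d : ℕ) (ε : ℝ) : ℝ :=
  ∑' N : ℕ, muBG d ε ^ N / (Nat.factorial N : ℝ) * ∫ X : Fin N → Torus d, exclInd ε X

/-- The grand canonical equilibrium expectation of a functional
`F : ⨆_N (𝕋^d × ℝ^d)^N → ℝ`. -/
noncomputable def gceExp (d : ℕ) (ε : ℝ) (F : (N : ℕ) → (Fin N → Phase d) → ℝ) : ℝ :=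
  (partitionZ d ε)⁻¹ *
    ∑' N : ℕ, muBG d ε ^ N / (Nat.factorial N : ℝ) *
      ∫ Z : Fin N → Phase d,
        exclInd ε (fun i => (Z i).1) * (∏ i, maxwellian (Z i).2) * F N Z

/-- The empirical density `π^ε(h) = μ_ε^{-1} ∑_i h(z_i)`. -/
noncomputable def empDens {d : ℕ} (ε : ℝ) (h : Phase d → ℝ) (N : ℕ)
    (Z : Fin N → Phase d) : ℝ :=
  (muBG d ε)⁻¹ * ∑ i, h (Z i)

/-- The equilibrium fluctuation field `ζ^{ε,eq}(h) = √μ_ε (π ^ε(h) - 𝔼^eq_ε[π^ε(h)])`. -/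
noncomputable def fluctField (d : ℕ) (ε : ℝ) (h : Phase d → ℝ) (N : ℕ)
    (Z : Fin N → Phase d) : ℝ :=
  Real.sqrt (muBG d ε) * (empDens ε h N Z - gceExp d ε (fun M W => empDens ε h M W))

end

/-- The grand canonical equilibrium expectation of a complex-valued functional. -/
noncomputable def gceExpC (d : ℕ) (ε : ℝ) (F : (N : ℕ) → (Fin N → Phase d) → ℂ) : ℂ :=
  ((partitionZ d ε : ℝ) : ℂ)⁻¹ *
    ∑' N : ℕ, ((muBG d ε ^ N / (Nat.factorial N : ℝ) : ℝ) : ℂ) *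
      ∫ Z : Fin N → Phase d,
        ((exclInd ε (fun i => (Z i).1) * ∏ i, maxwellian (Z i).2 : ℝ) : ℂ) * F N Z

open MeasureTheory Real Filter Topology

section Vitali

lemma vit_coef {ι : Type*} {l : Filter ι} (b : ι → ℕ → ℂ) (M : ℝ) (hM0 : 0 ≤ M)
    (hM : ∀ᶠ i in l, ∀ n, ‖b i n‖ ≤ M)
    (hE : ∀ t : ℝ, Tendsto (fun i => ∑' n, b i n * (t : ℂ) ^ n) l (𝓝 0)) (n : ℕ) :
    Tendsto (fun i => b i n) l (𝓝 0) := by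
  induction n using Nat.strong_induction_on with
  | _ n ih =>
  rw [Metric.tendsto_nhds]
  intro δ hδ
  set t : ℝ := min (1/2) (δ / (4 * (M + 1))) with ht
  have ht0 : 0 < t := by positivity
  have ht1 : t ≤ 1/2 := min_le_left _ _
  have ht2 : 2 * M * t < δ / 2 + δ / 4 := by
    have : t ≤ δ / (4 * (M + 1)) := min_le_right _ _
    rw [le_div_iff₀ (by positivity)] at this
    nlinarith
  have hS : Tendsto (fun i => (∑' n, b i n * (t : ℂ) ^ n) - ∑ k ∈ Finset.range n, b i k * (t:ℂ)^k)
      l (𝓝 0) := by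
    have : Tendsto (fun i => ∑ k ∈ Finset.range n, b i k * (t:ℂ)^k) l (𝓝 (∑ k ∈ Finset.range n, 0 * (t:ℂ)^k)) := by
      apply tendsto_finsetSum
      intro k hk
      exact (ih k (Finset.mem_range.1 hk)).mul_const _
    simpa using (hE t).sub this
  rw [Metric.tendsto_nhds] at hS
  filter_upwards [hM, hS (δ / 4 * t ^ n) (by positivity)] with i hi hSi
  rw [dist_zero_right] at hSi ⊢
  have hsum : Summable (fun k => b i k * (t:ℂ)^k) := by
    apply Summable.of_norm_bounded (g := fun k => M * (1/2:ℝ)^k)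
    · exact (summable_geometric_of_lt_one (by norm_num) (by norm_num)).mul_left _
    · intro k
      rw [norm_mul, norm_pow, Complex.norm_real, Real.norm_of_nonneg ht0.le]
      gcongr
      exact hi k
  have hsplit := hsum.sum_add_tsum_nat_add (n+1)
  rw [Finset.sum_range_succ] at hsplit
  have htail : ‖∑' k, b i (k + (n+1)) * (t:ℂ)^(k + (n+1))‖ ≤ M * t^(n+1) * 2 := by
    apply tsum_of_norm_bounded (f := fun k => b i (k + (n+1)) * (t:ℂ)^(k + (n+1)))
      (g := fun k => M * t^(n+1) * (1/2:ℝ)^k)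
    · exact hasSum_geometric_two.mul_left _
    · intro k
      rw [norm_mul, norm_pow, Complex.norm_real, Real.norm_of_nonneg ht0.le, pow_add]
      have h1 : t^k ≤ (1/2)^k := by gcongr
      have h2 := hi (k + (n+1))
      have h3 : 0 ≤ t^(n+1) := by positivity
      calc ‖b i (k+(n+1))‖ * (t^k * t^(n+1)) ≤ M * ((1/2)^k * t^(n+1)) := by gcongr
        _ = _ := by ring
  have hb : b i n * (t:ℂ)^n = ((∑' n, b i n * (t : ℂ) ^ n) - ∑ k ∈ Finset.range n, b i k * (t:ℂ)^k)
      - ∑' k, b i (k + (n+1)) * (t:ℂ)^(k + (n+1)) := by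
    rw [← hsplit]; ring
  have hn : ‖b i n‖ * t^n < δ * t^n := by
    calc ‖b i n‖ * t^n = ‖b i n * (t:ℂ)^n‖ := by
          rw [norm_mul, norm_pow, Complex.norm_real, Real.norm_of_nonneg ht0.le]
      _ < δ / 4 * t^n + M * t^(n+1) * 2 := by
          rw [hb]; exact (norm_sub_le _ _).trans_lt (by linarith)
      _ ≤ δ / 4 * t^n + (δ/2 + δ/4) * t^n := by
          have : 0 < t^n := by positivity
          rw [pow_succ]; nlinarith
      _ = _ := by ring
  exact lt_of_mul_lt_mul_right hn (by positivity)

lemma vitali_entire {ι : Type*} {l : Filter ι} (F : ι → ℂ → ℂ) (G : ℂ → ℂ)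
    (hF : ∀ᶠ i in l, Differentiable ℂ (F i)) (hG : Differentiable ℂ G)
    (hbd : ∀ R : ℝ, ∃ M : ℝ, ∀ᶠ i in l, ∀ z : ℂ, ‖z‖ ≤ R → ‖F i z‖ ≤ M)
    (hlim : ∀ t : ℝ, Tendsto (fun i => F i t) l (𝓝 (G t))) (z : ℂ) :
    Tendsto (fun i => F i z) l (𝓝 (G z)) := by
  set b : ι → ℕ → ℂ := fun i n => ((n.factorial : ℂ))⁻¹ * iteratedDeriv n (fun z => F i z - G z) 0 with hb
  have hbdd : ∀ R : ℝ, 0 < R → ∃ M : ℝ, 0 ≤ M ∧ ∀ᶠ i in l, ∀ n, ‖b i n‖ ≤ M / R ^ n := by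
    intro R hR
    obtain ⟨M, hM⟩ := hbd R
    obtain ⟨M', hM'⟩ := (isCompact_closedBall (0:ℂ) R).exists_bound_of_continuousOn hG.continuous.continuousOn
    refine ⟨|M| + |M'|, by positivity, ?_⟩
    filter_upwards [hM, hF] with i hi hFi n
    have hd : Differentiable ℂ (fun z => F i z - G z) := hFi.sub hG
    have := Complex.norm_iteratedDeriv_le_of_forall_mem_sphere_norm_le (c := 0) (C := |M| + |M'|) n hR
      hd.diffContOnCl (by
        intro w hw
        have hw' : ‖w‖ = R := by simpa using hw
        have h1 := hi w hw'.le
        have h2 := hM' w (by simp [hw'])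
        calc _ ≤ ‖F i w‖ + ‖G w‖ := norm_sub_le _ _
          _ ≤ _ := add_le_add (h1.trans (le_abs_self _)) (h2.trans (le_abs_self _)))
    simp only [hb]
    rw [norm_mul, norm_inv, Complex.norm_natCast, inv_mul_le_iff₀ (by positivity)]
    rw [← mul_div_assoc]
    exact this
  have hsum : ∀ᶠ i in l, ∀ w : ℂ, ∑' n, b i n * w ^ n = F i w - G w := by
    filter_upwards [hF] with i hFi w
    have hd : Differentiable ℂ (fun z => F i z - G z) := hFi.sub hG
    rw [← Complex.taylorSeries_eq_of_entire hd 0 w]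
    congr 1; ext n
    simp only [hb, smul_eq_mul, sub_zero]; ring
  have hcoef : ∀ n, Tendsto (fun i => b i n) l (𝓝 0) := by
    obtain ⟨M, hM0, hM⟩ := hbdd 1 one_pos
    refine vit_coef b M hM0 (by simpa using hM) ?_
    intro t
    have : Tendsto (fun i => F i t - G t) l (𝓝 0) := by
      simpa using (hlim t).sub_const (G t)
    refine this.congr' ?_
    filter_upwards [hsum] with i hi
    rw [hi]
  obtain ⟨M, hM0, hM⟩ := hbdd (2 * ‖z‖ + 1) (by positivity)
  have hlast : Tendsto (fun i => ∑' n, b i n * z ^ n) l (𝓝 (∑' n : ℕ, 0 * z ^ n)) := by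
    refine tendsto_tsum_of_dominated_convergence (bound := fun n => M * (1/2:ℝ)^n)
      ((summable_geometric_of_lt_one (by norm_num) (by norm_num)).mul_left _) ?_ ?_
    · intro k
      exact (hcoef k).mul_const _
    · filter_upwards [hM] with i hi n
      rw [norm_mul, norm_pow]
      have h1 : ‖z‖ ^ n ≤ (2 * ‖z‖ + 1)^n * (1/2)^n := by
        rw [← mul_pow]; gcongr; linarith [norm_nonneg z]
      calc ‖b i n‖ * ‖z‖^n ≤ M / (2 * ‖z‖ + 1)^n * ((2 * ‖z‖ + 1)^n * (1/2)^n) := by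
            gcongr; exact hi n
        _ = M * (1/2)^n := by field_simp
  have h2 : Tendsto (fun i => F i z - G z) l (𝓝 0) := by
    have hz : (∑' n : ℕ, (0:ℂ) * z ^ n) = 0 := by simp
    rw [hz] at hlast
    refine hlast.congr' ?_
    filter_upwards [hsum] with i hi
    rw [hi]
  simpa using h2.add_const (G z)

end Vitali
section Gibbs

set_option linter.unusedSectionVars false
set_option linter.unusedVariables false

variable {Ω : Type*} [MeasurableSpace Ω]

open Classical in
noncomputable def gEx (r : Ω → Ω → Prop) (N : ℕ) (z : Fin N → Ω) : ℝ :=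
  if ∀ i j : Fin N, i ≠ j → r (z i) (z j) then 1 else 0

open Classical in
noncomputable def gOk (r : Ω → Ω → Prop) (y x : Ω) : ℝ := if r y x then 1 else 0

noncomputable def gW (ν : Measure Ω) (r : Ω → Ω → Prop) (lam : Ω → ℝ) (N : ℕ) : ℝ :=
  ∫ z, gEx r N z * ∏ i, lam (z i) ∂(Measure.pi fun _ : Fin N => ν)

noncomputable def gZ (ν : Measure Ω) (r : Ω → Ω → Prop) (lam : Ω → ℝ) : ℝ :=
  ∑' N : ℕ, ((N.factorial : ℝ))⁻¹ * gW ν r lam N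

noncomputable def gD (ν : Measure Ω) (r : Ω → Ω → Prop) (lam G : Ω → ℝ) (N : ℕ) : ℝ :=
  ∫ z, gEx r N z * ∑ i, (∏ j ∈ Finset.univ.erase i, lam (z j)) * G (z i)
    ∂(Measure.pi fun _ : Fin N => ν)

lemma gEx_nonneg (r : Ω → Ω → Prop) (N : ℕ) (z : Fin N → Ω) : 0 ≤ gEx r N z := by
  unfold gEx; split_ifs <;> norm_num
lemma gEx_le (r : Ω → Ω → Prop) (N : ℕ) (z : Fin N → Ω) : gEx r N z ≤ 1 := by
  unfold gEx; split_ifs <;> norm_num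
lemma gOk_nonneg (r : Ω → Ω → Prop) (y x : Ω) : 0 ≤ gOk r y x := by
  unfold gOk; split_ifs <;> norm_num
lemma gOk_le (r : Ω → Ω → Prop) (y x : Ω) : gOk r y x ≤ 1 := by
  unfold gOk; split_ifs <;> norm_num

lemma gEx_meas {r : Ω → Ω → Prop} (hr : MeasurableSet {p : Ω × Ω | r p.1 p.2}) (N : ℕ) :
    Measurable (gEx r N) := by
  unfold gEx
  refine Measurable.ite ?_ measurable_const measurable_const
  have : {z : Fin N → Ω | ∀ i j : Fin N, i ≠ j → r (z i) (z j)} =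
      ⋂ i : Fin N, ⋂ j : Fin N, ⋂ _ : i ≠ j, (fun z : Fin N → Ω => (z i, z j)) ⁻¹' {p | r p.1 p.2} := by
    ext z; simp
  rw [this]
  refine MeasurableSet.iInter fun i => MeasurableSet.iInter fun j => MeasurableSet.iInter fun _ => ?_
  exact ((measurable_pi_apply i).prodMk (measurable_pi_apply j)) hr

lemma gOk_meas {r : Ω → Ω → Prop} (hr : MeasurableSet {p : Ω × Ω | r p.1 p.2}) :
    Measurable (fun p : Ω × Ω => gOk r p.1 p.2) := by
  unfold gOk
  exact Measurable.ite hr measurable_const measurable_const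

lemma gEx_insert {r : Ω → Ω → Prop} (hs : ∀ x y, r x y → r y x) (N : ℕ) (i : Fin (N+1)) (y : Ω)
    (w : Fin N → Ω) :
    gEx r (N+1) (Fin.insertNth (α := fun _ => Ω) i y w) = gEx r N w * ∏ j, gOk r y (w j) := by
  classical
  unfold gEx gOk
  rw [Finset.prod_boole]
  simp only [Finset.mem_univ, true_imp_iff]
  have key : (∀ a b : Fin (N+1), a ≠ b → r (Fin.insertNth (α := fun _ => Ω) i y w a)
      (Fin.insertNth (α := fun _ => Ω) i y w b)) ↔
      ((∀ a b : Fin N, a ≠ b → r (w a) (w b)) ∧ ∀ a, r y (w a)) := by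
    rw [Fin.forall_iff_succAbove i]
    simp only [Fin.forall_iff_succAbove i, Fin.insertNth_apply_same, Fin.insertNth_apply_succAbove]
    constructor
    · rintro ⟨⟨-, h1⟩, h2⟩
      refine ⟨fun a b hab => (h2 a).2 b (by simpa using hab), fun a => h1 a (Fin.succAbove_ne i a).symm⟩
    · rintro ⟨h1, h2⟩
      refine ⟨⟨fun h => absurd rfl h, fun a _ => h2 a⟩,
        fun a => ⟨fun _ => hs _ _ (h2 a), fun b hab => h1 a b ?_⟩⟩
      rintro rfl; exact hab rfl
  rw [if_congr key rfl rfl, ite_and]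
  split_ifs <;> simp

variable (ν : Measure Ω) [IsProbabilityMeasure ν]

lemma gprod_bound {N : ℕ} {lam : Ω → ℝ} {C : ℝ} (hC : ∀ x, |lam x| ≤ C) (s : Finset (Fin N))
    (z : Fin N → Ω) : |∏ i ∈ s, lam (z i)| ≤ C ^ s.card := by
  rw [Finset.abs_prod]
  calc _ ≤ ∏ _i ∈ s, C := Finset.prod_le_prod (fun _ _ => abs_nonneg _) (fun i _ => hC _)
    _ = _ := by simp

lemma gW_integrable {r : Ω → Ω → Prop} (hr : MeasurableSet {p : Ω × Ω | r p.1 p.2}) {lam : Ω → ℝ}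
    (hl : Measurable lam) {C : ℝ} (hC : ∀ x, |lam x| ≤ C) (N : ℕ) :
    Integrable (fun z => gEx r N z * ∏ i, lam (z i)) (Measure.pi fun _ : Fin N => ν) := by
  refine Integrable.of_bound (C := C ^ N) ?_ ?_
  · refine ((gEx_meas hr N).mul ?_).aestronglyMeasurable
    exact Finset.measurable_prod _ fun i _ => hl.comp (measurable_pi_apply i)
  · refine ae_of_all _ fun z => ?_
    rw [norm_mul, Real.norm_of_nonneg (gEx_nonneg _ _ _)]
    have := gprod_bound hC Finset.univ z
    simp only [Finset.card_univ, Fintype.card_fin] at this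
    calc _ ≤ 1 * C^N := mul_le_mul (gEx_le _ _ _) this (abs_nonneg _) zero_le_one
      _ = _ := one_mul _

lemma gW_bound (r : Ω → Ω → Prop) {lam : Ω → ℝ} {C : ℝ} (hC : ∀ x, |lam x| ≤ C) (N : ℕ) :
    |gW ν r lam N| ≤ C ^ N := by
  unfold gW
  rw [← Real.norm_eq_abs]
  refine (norm_integral_le_of_norm_le_const (C := C^N) (ae_of_all _ fun z => ?_)).trans (by simp)
  rw [norm_mul, Real.norm_of_nonneg (gEx_nonneg _ _ _)]
  have := gprod_bound hC Finset.univ z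
  simp only [Finset.card_univ, Fintype.card_fin] at this
  calc _ ≤ 1 * C^N := mul_le_mul (gEx_le _ _ _) this (abs_nonneg _) zero_le_one
    _ = _ := one_mul _

lemma gsummable_pow (C : ℝ) : Summable (fun N : ℕ => ((N.factorial : ℝ))⁻¹ * C ^ N) := by
  have := Real.summable_pow_div_factorial C
  simpa [div_eq_inv_mul] using this

lemma gZ_summable (r : Ω → Ω → Prop) {lam : Ω → ℝ} {C : ℝ} (hC : ∀ x, |lam x| ≤ C) :
    Summable (fun N : ℕ => ((N.factorial : ℝ))⁻¹ * gW ν r lam N) := by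
  refine Summable.of_norm_bounded (gsummable_pow C) fun N => ?_
  rw [norm_mul, Real.norm_of_nonneg (by positivity), Real.norm_eq_abs]
  gcongr
  exact gW_bound ν r hC N

lemma gW_nonneg (r : Ω → Ω → Prop) {lam : Ω → ℝ} (h0 : ∀ x, 0 ≤ lam x) (N : ℕ) :
    0 ≤ gW ν r lam N :=
  integral_nonneg fun z => mul_nonneg (gEx_nonneg _ _ _) (Finset.prod_nonneg fun i _ => h0 _)

lemma gW_zero (r : Ω → Ω → Prop) (lam : Ω → ℝ) : gW ν r lam 0 = 1 := by
  unfold gW gEx; simp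

lemma gZ_ge_one (r : Ω → Ω → Prop) {lam : Ω → ℝ} (h0 : ∀ x, 0 ≤ lam x) {C : ℝ}
    (hC : ∀ x, |lam x| ≤ C) : 1 ≤ gZ ν r lam := by
  have := (gZ_summable ν r hC).le_tsum 0 (fun N _ => mul_nonneg (by positivity) (gW_nonneg ν r h0 N))
  simpa [gW_zero, gZ] using this

lemma gZ_mono {r : Ω → Ω → Prop} (hr : MeasurableSet {p : Ω × Ω | r p.1 p.2}) {lam lam' : Ω → ℝ}
    (hl : Measurable lam) (hl' : Measurable lam') (h0 : ∀ x, 0 ≤ lam x) (hle : ∀ x, lam x ≤ lam' x)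
    {C : ℝ} (hC : ∀ x, lam' x ≤ C) : gZ ν r lam ≤ gZ ν r lam' := by
  have hC' : ∀ x, |lam' x| ≤ C := fun x => by rw [abs_of_nonneg ((h0 x).trans (hle x))]; exact hC x
  have hC1 : ∀ x, |lam x| ≤ C := fun x => by rw [abs_of_nonneg (h0 x)]; exact (hle x).trans (hC x)
  refine (gZ_summable ν r hC1).tsum_le_tsum (fun N => ?_) (gZ_summable ν r hC')
  gcongr
  refine integral_mono (gW_integrable ν hr hl hC1 N) (gW_integrable ν hr hl' hC' N) fun z => ?_
  refine mul_le_mul_of_nonneg_left ?_ (gEx_nonneg _ _ _)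
  exact Finset.prod_le_prod (fun i _ => h0 _) (fun i _ => hle _)

lemma gD_ptwise_bound (r : Ω → Ω → Prop) {lam G : Ω → ℝ} {C : ℝ} (hC : ∀ x, |lam x| ≤ C)
    (hG : ∀ x, |G x| ≤ C) (N : ℕ) (z : Fin N → Ω) :
    ‖gEx r N z * ∑ i, (∏ j ∈ Finset.univ.erase i, lam (z j)) * G (z i)‖ ≤ N * C ^ N := by
  rw [norm_mul, Real.norm_of_nonneg (gEx_nonneg _ _ _)]
  have h2 : ‖∑ i, (∏ j ∈ Finset.univ.erase i, lam (z j)) * G (z i)‖ ≤ N * C ^ N := by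
    calc _ ≤ ∑ i : Fin N, C ^ N := norm_sum_le_of_le _ fun i _ => by
          have h := gprod_bound hC (Finset.univ.erase i) z
          have hN : 0 < N := i.pos
          rw [Finset.card_erase_of_mem (Finset.mem_univ i), Finset.card_univ, Fintype.card_fin] at h
          have hC0 : 0 ≤ C := (abs_nonneg _).trans (hC (z i))
          rw [norm_mul, Real.norm_eq_abs, Real.norm_eq_abs]
          calc _ ≤ C ^ (N-1) * C := mul_le_mul h (hG _) (abs_nonneg _) (by positivity)
            _ = C ^ N := by rw [← pow_succ]; congr 1; omega
      _ = _ := by simp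
  calc _ ≤ 1 * (N * C^N) := mul_le_mul (gEx_le _ _ _) h2 (norm_nonneg _) zero_le_one
      _ = _ := one_mul _

lemma gD_meas {r : Ω → Ω → Prop} (hr : MeasurableSet {p : Ω × Ω | r p.1 p.2}) {lam G : Ω → ℝ}
    (hl : Measurable lam) (hGm : Measurable G) (N : ℕ) :
    Measurable (fun z : Fin N → Ω => gEx r N z * ∑ i, (∏ j ∈ Finset.univ.erase i, lam (z j)) * G (z i)) := by
  refine (gEx_meas hr N).mul (Finset.measurable_sum _ fun i _ => ?_)
  exact (Finset.measurable_prod _ fun j _ => hl.comp (measurable_pi_apply j)).mul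
    (hGm.comp (measurable_pi_apply i))

lemma gD_bound (r : Ω → Ω → Prop) {lam G : Ω → ℝ} {C : ℝ} (hC : ∀ x, |lam x| ≤ C)
    (hG : ∀ x, |G x| ≤ C) (N : ℕ) : ‖gD ν r lam G N‖ ≤ N * C ^ N :=
  (norm_integral_le_of_norm_le_const (ae_of_all _ fun z => gD_ptwise_bound r hC hG N z)).trans (by simp)

lemma gprod_erase {N : ℕ} (i : Fin (N+1)) (f : Fin (N+1) → ℝ) :
    ∏ j ∈ Finset.univ.erase i, f j = ∏ j : Fin N, f (i.succAbove j) := by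
  rw [Fin.univ_succAbove N i, Finset.erase_cons]
  simp

lemma gD_succ {r : Ω → Ω → Prop} (hr : MeasurableSet {p : Ω × Ω | r p.1 p.2})
    (hs : ∀ x y, r x y → r y x) {lam G : Ω → ℝ} (hl : Measurable lam) (hGm : Measurable G) {C : ℝ}
    (hC : ∀ x, |lam x| ≤ C) (hG : ∀ x, |G x| ≤ C) (N : ℕ) :
    gD ν r lam G (N+1) = (N+1) * ∫ y, G y * gW ν r (fun x => gOk r y x * lam x) N ∂ν := by
  unfold gD
  have key : ∀ i : Fin (N+1), Integrable (fun z : Fin (N+1) → Ω =>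
        gEx r (N+1) z * ((∏ j ∈ Finset.univ.erase i, lam (z j)) * G (z i)))
        (Measure.pi fun _ : Fin (N+1) => ν) ∧
      ∫ z, gEx r (N+1) z * ((∏ j ∈ Finset.univ.erase i, lam (z j)) * G (z i))
        ∂(Measure.pi fun _ : Fin (N+1) => ν) = ∫ y, G y * gW ν r (fun x => gOk r y x * lam x) N ∂ν := by
    intro i
    have hint : Integrable (fun z : Fin (N+1) → Ω =>
        gEx r (N+1) z * ((∏ j ∈ Finset.univ.erase i, lam (z j)) * G (z i)))
        (Measure.pi fun _ : Fin (N+1) => ν) := by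
      refine Integrable.of_bound (C := C ^ N * C) ?_ (ae_of_all _ fun z => ?_)
      · exact ((gEx_meas hr _).mul ((Finset.measurable_prod _ fun j _ =>
          hl.comp (measurable_pi_apply j)).mul (hGm.comp (measurable_pi_apply i)))).aestronglyMeasurable
      · have h := gprod_bound hC (Finset.univ.erase i) z
        rw [Finset.card_erase_of_mem (Finset.mem_univ i), Finset.card_univ, Fintype.card_fin] at h
        have hC0 : 0 ≤ C := (abs_nonneg _).trans (hC (z i))
        rw [norm_mul, Real.norm_of_nonneg (gEx_nonneg _ _ _), norm_mul, Real.norm_eq_abs, Real.norm_eq_abs]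
        calc _ ≤ 1 * (C^N * C) := by
              refine mul_le_mul (gEx_le _ _ _) ?_ (by positivity) zero_le_one
              exact mul_le_mul h (hG _) (abs_nonneg _) (by positivity)
          _ = _ := one_mul _
    refine ⟨hint, ?_⟩
    have hmp := (measurePreserving_piFinSuccAbove (fun _ : Fin (N+1) => ν) i).symm
    rw [← hmp.integral_comp']
    have hint2 := (hmp.integrable_comp_emb (MeasurableEquiv.measurableEmbedding _)).2 hint
    refine (integral_prod _ hint2).trans ?_
    congr 1; ext y
    unfold gW
    rw [← integral_const_mul]
    congr 1; ext w
    simp only [Function.comp_apply]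
    have e : (MeasurableEquiv.piFinSuccAbove (fun _ : Fin (N+1) => Ω) i).symm (y, w) =
      Fin.insertNth (α := fun _ => Ω) i y w := rfl
    rw [e, gEx_insert hs, gprod_erase]
    simp only [Fin.insertNth_apply_same, Fin.insertNth_apply_succAbove, Finset.prod_mul_distrib]
    ring
  simp_rw [Finset.mul_sum]
  rw [integral_finsetSum _ fun i _ => (key i).1, Finset.sum_congr rfl fun i _ => (key i).2]
  simp

end Gibbs
section Gibbs2

set_option linter.unusedSectionVars false
set_option linter.unusedVariables false

variable {Ω : Type*} [MeasurableSpace Ω] (ν : Measure Ω) [IsProbabilityMeasure ν]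
  {r : Ω → Ω → Prop}

lemma gW_hasDeriv (hr : MeasurableSet {p : Ω × Ω | r p.1 p.2}) {lam G : Ω → ℝ}
    (hl : Measurable lam) (hGm : Measurable G) {C : ℝ}
    (hC : ∀ x, |lam x| ≤ C) (hG : ∀ x, |G x| ≤ C) (N : ℕ) (s : ℝ) :
    HasDerivAt (fun s => gW ν r (fun x => lam x + s * G x) N)
      (gD ν r (fun x => lam x + s * G x) G N) s := by
  set K := C + (|s| + 1) * C with hK
  have hbd : ∀ u ∈ Metric.ball s 1, ∀ x, |lam x + u * G x| ≤ K := by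
    intro u hu x
    have hu' : |u| ≤ |s| + 1 := by
      have : |u - s| < 1 := by simpa [Real.dist_eq] using hu
      have := abs_sub_abs_le_abs_sub u s
      linarith
    calc _ ≤ |lam x| + |u * G x| := abs_add_le _ _
      _ ≤ _ := by rw [abs_mul]; exact add_le_add (hC x) (mul_le_mul hu' (hG x) (abs_nonneg _) (by positivity))
  have hGK : ∀ x, |G x| ≤ K := fun x => by
    have h1 := hG x
    have h0 := (abs_nonneg _).trans h1
    have : 0 ≤ (|s| + 1) * C := by positivity
    linarith
  have hm : ∀ u : ℝ, Measurable (fun x => lam x + u * G x) := fun u => hl.add (hGm.const_mul u)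
  refine (hasDerivAt_integral_of_dominated_loc_of_deriv_le (𝕜 := ℝ)
    (F := fun u z => gEx r N z * ∏ i, (lam (z i) + u * G (z i)))
    (F' := fun u z => gEx r N z * ∑ i, (∏ j ∈ Finset.univ.erase i, (lam (z j) + u * G (z j))) * G (z i))
    (bound := fun _ => N * K ^ N) (Metric.ball_mem_nhds s one_pos) ?_ ?_ ?_ ?_ ?_ ?_).2
  · filter_upwards [Metric.ball_mem_nhds s one_pos] with u hu
    exact (gW_integrable ν hr (hm u) (hbd u hu) N).aestronglyMeasurable
  · exact gW_integrable ν hr (hm s) (hbd s (Metric.mem_ball_self one_pos)) N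
  · exact (gD_meas hr (hm s) hGm N).aestronglyMeasurable
  · exact ae_of_all _ fun z u hu => gD_ptwise_bound r (hbd u hu) hGK N z
  · exact integrable_const _
  · refine ae_of_all _ fun z u hu => HasDerivAt.const_mul _ ?_
    have := HasDerivAt.fun_finsetProd (u := Finset.univ) (x := u)
      (f := fun (i : Fin N) (u : ℝ) => lam (z i) + u * G (z i)) (f' := fun i => G (z i))
      (fun i _ => by simpa using ((hasDerivAt_id u).mul_const (G (z i))).const_add (lam (z i)))
    simpa using this

lemma gZ_hasDeriv (hr : MeasurableSet {p : Ω × Ω | r p.1 p.2}) {lam G : Ω → ℝ}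
    (hl : Measurable lam) (hGm : Measurable G) {C : ℝ}
    (hC : ∀ x, |lam x| ≤ C) (hG : ∀ x, |G x| ≤ C) (s : ℝ) :
    HasDerivAt (fun s => gZ ν r (fun x => lam x + s * G x))
      (∑' N : ℕ, ((N.factorial : ℝ))⁻¹ * gD ν r (fun x => lam x + s * G x) G N) s := by
  set K := C + (|s| + 1) * C with hK
  have hbd : ∀ u ∈ Metric.ball s 1, ∀ x, |lam x + u * G x| ≤ K := by
    intro u hu x
    have hu' : |u| ≤ |s| + 1 := by
      have : |u - s| < 1 := by simpa [Real.dist_eq] using hu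
      have := abs_sub_abs_le_abs_sub u s
      linarith
    calc _ ≤ |lam x| + |u * G x| := abs_add_le _ _
      _ ≤ _ := by rw [abs_mul]; exact add_le_add (hC x) (mul_le_mul hu' (hG x) (abs_nonneg _) (by positivity))
  have hGK : ∀ x, |G x| ≤ K := fun x => by
    have h1 := hG x
    have h0 := (abs_nonneg _).trans h1
    have : 0 ≤ (|s| + 1) * C := by positivity
    linarith
  unfold gZ
  refine hasDerivAt_tsum_of_isPreconnected (t := Metric.ball s 1)
    (g := fun N u => ((N.factorial : ℝ))⁻¹ * gW ν r (fun x => lam x + u * G x) N)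
    (g' := fun N u => ((N.factorial : ℝ))⁻¹ * gD ν r (fun x => lam x + u * G x) G N)
    (gsummable_pow (2 * |K|)) Metric.isOpen_ball
    (convex_ball s 1).isPreconnected ?_ ?_ (Metric.mem_ball_self one_pos) ?_ (Metric.mem_ball_self one_pos)
  · intro N u hu
    exact (gW_hasDeriv ν hr hl hGm hC hG N u).const_mul _
  · intro N u hu
    rw [norm_mul, Real.norm_of_nonneg (by positivity), mul_pow]
    gcongr
    refine (gD_bound ν r (hbd u hu) hGK N).trans ?_
    have h1 : (N:ℝ) ≤ 2 ^ N := by exact_mod_cast Nat.lt_two_pow_self.le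
    have h2 : K ^ N ≤ |K| ^ N := by rw [← abs_pow]; exact le_abs_self _
    calc (N:ℝ) * K^N ≤ N * |K|^N := by gcongr
      _ ≤ _ := by gcongr
  · exact gZ_summable ν r (hbd s (Metric.mem_ball_self one_pos))

lemma gOk_mul_abs {lam : Ω → ℝ} {C : ℝ} (hC : ∀ x, |lam x| ≤ C) (y x : Ω) :
    |gOk r y x * lam x| ≤ C := by
  rw [abs_mul, abs_of_nonneg (gOk_nonneg r y x)]
  exact (mul_le_of_le_one_left (abs_nonneg _) (gOk_le r y x)).trans (hC x)

lemma gOk_meas_right (hr : MeasurableSet {p : Ω × Ω | r p.1 p.2}) (y : Ω) :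
    Measurable (fun x => gOk r y x) := (gOk_meas hr).comp measurable_prodMk_left

lemma gW_meas (hr : MeasurableSet {p : Ω × Ω | r p.1 p.2}) {lam : Ω → ℝ}
    (hl : Measurable lam) (N : ℕ) :
    Measurable (fun y => gW ν r (fun x => gOk r y x * lam x) N) := by
  unfold gW
  refine StronglyMeasurable.measurable ?_
  refine StronglyMeasurable.integral_prod_right
    (f := fun y (z : Fin N → Ω) => gEx r N z * ∏ i, (gOk r y (z i) * lam (z i))) ?_
  refine Measurable.stronglyMeasurable ?_
  refine ((gEx_meas hr N).comp measurable_snd).mul (Finset.measurable_prod _ fun i _ => ?_)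
  exact ((gOk_meas hr).comp (measurable_fst.prodMk ((measurable_pi_apply i).comp measurable_snd))).mul
    (hl.comp ((measurable_pi_apply i).comp measurable_snd))

lemma gZ_meas (hr : MeasurableSet {p : Ω × Ω | r p.1 p.2}) {lam : Ω → ℝ}
    (hl : Measurable lam) {C : ℝ} (hC : ∀ x, |lam x| ≤ C) :
    Measurable (fun y => gZ ν r (fun x => gOk r y x * lam x)) := by
  refine measurable_of_tendsto_metrizable
    (f := fun n y => ∑ N ∈ Finset.range n, ((N.factorial : ℝ))⁻¹ * gW ν r (fun x => gOk r y x * lam x) N) ?_ ?_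
  · intro n
    exact Finset.measurable_sum _ fun N _ => (gW_meas ν hr hl N).const_mul _
  · rw [tendsto_pi_nhds]
    intro y
    exact (gZ_summable ν r (gOk_mul_abs hC y)).hasSum.tendsto_sum_nat

lemma gD_sum (hr : MeasurableSet {p : Ω × Ω | r p.1 p.2})
    (hs : ∀ x y, r x y → r y x) {lam G : Ω → ℝ} (hl : Measurable lam) (hGm : Measurable G) {C : ℝ}
    (hC : ∀ x, |lam x| ≤ C) (hG : ∀ x, |G x| ≤ C) :
    ∑' N : ℕ, ((N.factorial : ℝ))⁻¹ * gD ν r lam G N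
      = ∫ y, G y * gZ ν r (fun x => gOk r y x * lam x) ∂ν := by
  have hsm : Summable (fun N : ℕ => ((N.factorial : ℝ))⁻¹ * gD ν r lam G N) := by
    refine Summable.of_norm_bounded (gsummable_pow (2 * |C|)) fun N => ?_
    rw [norm_mul, Real.norm_of_nonneg (by positivity), mul_pow]
    gcongr
    refine (gD_bound ν r hC hG N).trans ?_
    have h1 : (N:ℝ) ≤ 2 ^ N := by exact_mod_cast Nat.lt_two_pow_self.le
    have h2 : C ^ N ≤ |C| ^ N := by rw [← abs_pow]; exact le_abs_self _
    calc (N:ℝ) * C^N ≤ N * |C|^N := by gcongr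
      _ ≤ _ := by gcongr
  rw [hsm.tsum_eq_zero_add]
  have h0 : gD ν r lam G 0 = 0 := by unfold gD; simp
  rw [h0, mul_zero, zero_add]
  have hterm : ∀ N : ℕ, (((N+1).factorial : ℝ))⁻¹ * gD ν r lam G (N+1) =
      ∫ y, ((N.factorial : ℝ))⁻¹ * (G y * gW ν r (fun x => gOk r y x * lam x) N) ∂ν := by
    intro N
    rw [gD_succ ν hr hs hl hGm hC hG, integral_const_mul, Nat.factorial_succ]
    push_cast
    field_simp
  have hptb : ∀ N : ℕ, ∀ y, ‖((N.factorial : ℝ))⁻¹ * (G y * gW ν r (fun x => gOk r y x * lam x) N)‖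
      ≤ |C| * (((N.factorial : ℝ))⁻¹ * |C| ^ N) := by
    intro N y
    rw [norm_mul, Real.norm_of_nonneg (by positivity : (0:ℝ) ≤ ((N.factorial : ℝ))⁻¹), norm_mul,
      Real.norm_eq_abs, Real.norm_eq_abs]
    have h1 := gW_bound ν r (gOk_mul_abs (r := r) hC y) N
    have h2 : C ^ N ≤ |C| ^ N := by rw [← abs_pow]; exact le_abs_self _
    calc _ ≤ ((N.factorial : ℝ))⁻¹ * (|C| * |C|^N) := by
          refine mul_le_mul_of_nonneg_left ?_ (by positivity)
          exact mul_le_mul ((hG y).trans (le_abs_self _)) (h1.trans h2) (abs_nonneg _) (abs_nonneg _)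
      _ = _ := by ring
  simp_rw [hterm]
  rw [(hasSum_integral_of_summable_integral_norm (F := fun (N:ℕ) y =>
    ((N.factorial : ℝ))⁻¹ * (G y * gW ν r (fun x => gOk r y x * lam x) N)) ?_ ?_).tsum_eq]
  · congr 1; ext y
    unfold gZ
    rw [← tsum_mul_left]
    congr 1; ext N; ring
  · intro N
    exact Integrable.of_bound (((hGm.mul (gW_meas ν hr hl N)).const_mul _).aestronglyMeasurable) _
      (ae_of_all _ (hptb N))
  · refine Summable.of_nonneg_of_le (fun N => integral_nonneg fun y => norm_nonneg _) (fun N => ?_)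
      ((gsummable_pow |C|).mul_left |C|)
    have := norm_integral_le_of_norm_le_const (μ := ν) (f := fun y => ‖((N.factorial : ℝ))⁻¹ * (G y * gW ν r (fun x => gOk r y x * lam x) N)‖) (ae_of_all _ fun y => by
      rw [norm_norm]; exact hptb N y)
    refine (le_abs_self _).trans (this.trans (by simp))

noncomputable def gR (ν : Measure Ω) (r : Ω → Ω → Prop) (lam : Ω → ℝ) (y : Ω) : ℝ :=
  gZ ν r (fun x => gOk r y x * lam x) / gZ ν r lam

/-- admissible activities -/
structure gAdm (L : ℝ) (lam : Ω → ℝ) : Prop where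
  m : Measurable lam
  n : ∀ x, 0 ≤ lam x
  l : ∀ x, lam x ≤ L

lemma gAdm.a {L : ℝ} {lam : Ω → ℝ} (h : gAdm L lam) (x : Ω) : |lam x| ≤ L := by
  rw [abs_of_nonneg (h.n x)]; exact h.l x

lemma gAdm.ok (hr : MeasurableSet {p : Ω × Ω | r p.1 p.2}) {L : ℝ} {lam : Ω → ℝ} (h : gAdm L lam) (y : Ω) :
    gAdm L (fun x => gOk r y x * lam x) where
  m := (gOk_meas_right hr y).mul h.m
  n := fun x => mul_nonneg (gOk_nonneg r y x) (h.n x)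
  l := fun x => (mul_le_of_le_one_left (h.n x) (gOk_le r y x)).trans (h.l x)

lemma gR_pos (hr : MeasurableSet {p : Ω × Ω | r p.1 p.2}) {L : ℝ} {lam : Ω → ℝ} (h : gAdm L lam) (y : Ω) :
    0 < gR ν r lam y := by
  have h1 := gZ_ge_one ν r h.n h.a
  have h2 := gZ_ge_one ν r (h.ok hr y).n (h.ok hr y).a
  unfold gR; positivity

lemma gR_le (hr : MeasurableSet {p : Ω × Ω | r p.1 p.2}) {L : ℝ} {lam : Ω → ℝ} (h : gAdm L lam) (y : Ω) :
    gR ν r lam y ≤ 1 := by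
  have h1 := gZ_ge_one ν r h.n h.a
  unfold gR
  rw [div_le_one (by positivity)]
  exact gZ_mono ν hr (h.ok hr y).m h.m (h.ok hr y).n
    (fun x => mul_le_of_le_one_left (h.n x) (gOk_le r y x)) h.l

lemma gR_meas (hr : MeasurableSet {p : Ω × Ω | r p.1 p.2}) {L : ℝ} {lam : Ω → ℝ} (h : gAdm L lam) :
    Measurable (gR ν r lam) := (gZ_meas ν hr h.m h.a).div_const _

lemma gLogZ_hasDeriv (hr : MeasurableSet {p : Ω × Ω | r p.1 p.2})
    (hs : ∀ x y, r x y → r y x) {lam G : Ω → ℝ} (hl : Measurable lam) (hGm : Measurable G) {C : ℝ}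
    (hC : ∀ x, |lam x| ≤ C) (hG : ∀ x, |G x| ≤ C) (s : ℝ) {L : ℝ}
    (hadm : gAdm L (fun x => lam x + s * G x)) :
    HasDerivAt (fun s => Real.log (gZ ν r (fun x => lam x + s * G x)))
      (∫ y, G y * gR ν r (fun x => lam x + s * G x) y ∂ν) s := by
  have h1 := gZ_ge_one ν r hadm.n hadm.a
  have h2 := (gZ_hasDeriv ν hr hl hGm hC hG s).log (by positivity)
  have hGc : ∀ x, |G x| ≤ max C L := fun x => (hG x).trans (le_max_left _ _)
  rw [gD_sum ν hr hs hadm.m hGm (fun x => (hadm.a x).trans (le_max_right C L)) hGc] at h2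
  convert! h2 using 1
  rw [← integral_div]
  congr 1; ext y
  unfold gR; ring

end Gibbs2
section Gibbs3

set_option linter.unusedSectionVars false
set_option linter.unusedVariables false

variable {Ω : Type*} [MeasurableSpace Ω] (ν : Measure Ω) [IsProbabilityMeasure ν]
  {r : Ω → Ω → Prop}

lemma abs_sub_le_log {a b : ℝ} (ha : 0 < a) (ha1 : a ≤ 1) (hb : 0 < b) (hb1 : b ≤ 1) :
    |a - b| ≤ |Real.log a - Real.log b| := by
  have main : ∀ a b : ℝ, 0 < a → a ≤ 1 → 0 < b → b ≤ a → a - b ≤ Real.log a - Real.log b := by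
    intro a b ha ha1 hb hba
    rw [← Real.log_div ha.ne' hb.ne']
    have h1 := Real.one_sub_inv_le_log_of_pos (div_pos ha hb)
    rw [inv_div] at h1
    refine le_trans ?_ h1
    have : 1 - b / a = (a - b) / a := by field_simp
    rw [this, le_div_iff₀ ha]
    nlinarith
  rcases le_total b a with h | h
  · rw [abs_of_nonneg (sub_nonneg.2 h)]
    exact (main a b ha ha1 hb h).trans (le_abs_self _)
  · rw [abs_sub_comm, abs_sub_comm (Real.log a), abs_of_nonneg (sub_nonneg.2 h)]
    exact (main b a hb hb1 ha h).trans (le_abs_self _)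

lemma gAdm.seg {L : ℝ} {lam lam' : Ω → ℝ} (h : gAdm L lam) (h' : gAdm L lam') {s : ℝ}
    (hs : s ∈ Set.Icc (0:ℝ) 1) : gAdm L (fun x => lam x + s * (lam' x - lam x)) where
  m := h.m.add ((h'.m.sub h.m).const_mul s)
  n := fun x => by
    have := h.n x; have := h'.n x; obtain ⟨h0, h1⟩ := hs
    nlinarith [mul_nonneg h0 (h'.n x), mul_nonneg (sub_nonneg.2 h1) (h.n x)]
  l := fun x => by
    have := h.l x; have := h'.l x; obtain ⟨h0, h1⟩ := hs
    nlinarith [mul_le_mul_of_nonneg_left (h'.l x) h0, mul_le_mul_of_nonneg_left (h.l x) (sub_nonneg.2 h1)]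

lemma gLogZ_seg (hr : MeasurableSet {p : Ω × Ω | r p.1 p.2})
    (hs : ∀ x y, r x y → r y x) {L : ℝ} {lam lam' : Ω → ℝ} (h : gAdm L lam) (h' : gAdm L lam') {s : ℝ}
    (hs1 : s ∈ Set.Icc (0:ℝ) 1) :
    HasDerivAt (fun s => Real.log (gZ ν r (fun x => lam x + s * (lam' x - lam x))))
      (∫ y, (lam' y - lam y) * gR ν r (fun x => lam x + s * (lam' x - lam x)) y ∂ν) s :=
  gLogZ_hasDeriv ν hr hs (G := fun x => lam' x - lam x) (C := L) h.m (h'.m.sub h.m) h.a (fun x => by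
    rw [abs_le]; constructor <;> linarith [h.n x, h'.n x, h.l x, h'.l x]) s (h.seg h' hs1)

lemma gLogZ_mvt (hr : MeasurableSet {p : Ω × Ω | r p.1 p.2})
    (hs : ∀ x y, r x y → r y x) {L : ℝ} {lam lam' : Ω → ℝ} (h : gAdm L lam) (h' : gAdm L lam') :
    ∃ s ∈ Set.Icc (0:ℝ) 1, Real.log (gZ ν r lam') - Real.log (gZ ν r lam) =
      ∫ y, (lam' y - lam y) * gR ν r (fun x => lam x + s * (lam' x - lam x)) y ∂ν := by
  obtain ⟨c, hc, he⟩ := exists_hasDerivAt_eq_slope _ _ (zero_lt_one (α := ℝ))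
    (fun s hs1 => (gLogZ_seg ν hr hs h h' hs1).continuousAt.continuousWithinAt)
    (fun s hs1 => gLogZ_seg ν hr hs h h' (Set.Ioo_subset_Icc_self hs1))
  refine ⟨c, Set.Ioo_subset_Icc_self hc, ?_⟩
  rw [he]; simp

lemma gInt_bd {f : Ω → ℝ} {C : ℝ} (hf : ∀ x, |f x| ≤ C) : |∫ x, f x ∂ν| ≤ C := by
  have := norm_integral_le_of_norm_le_const (μ := ν) (f := f) (C := C) (ae_of_all _ hf)
  simpa using this

lemma gLogZ_crude (hr : MeasurableSet {p : Ω × Ω | r p.1 p.2})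
    (hs : ∀ x y, r x y → r y x) {L : ℝ} {lam lam' : Ω → ℝ} (h : gAdm L lam) (h' : gAdm L lam') {δ : ℝ}
    (hδ : ∀ x, |lam' x - lam x| ≤ δ) : |Real.log (gZ ν r lam') - Real.log (gZ ν r lam)| ≤ δ := by
  obtain ⟨s, hs1, he⟩ := gLogZ_mvt ν hr hs h h'
  rw [he]
  refine gInt_bd ν fun y => ?_
  have ha := h.seg h' hs1
  rw [abs_mul, abs_of_pos (gR_pos ν hr ha y)]
  exact (mul_le_of_le_one_right (abs_nonneg _) (gR_le ν hr ha y)).trans (hδ y)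

lemma gLogR (hr : MeasurableSet {p : Ω × Ω | r p.1 p.2}) {L : ℝ} {lam : Ω → ℝ} (h : gAdm L lam) (x : Ω) :
    Real.log (gR ν r lam x) = Real.log (gZ ν r (fun y => gOk r x y * lam y)) - Real.log (gZ ν r lam) := by
  have h1 := gZ_ge_one ν r h.n h.a
  have h2 := gZ_ge_one ν r (h.ok hr x).n (h.ok hr x).a
  unfold gR
  rw [Real.log_div (by positivity) (by positivity)]

def gLip (ν : Measure Ω) (r : Ω → Ω → Prop) (L c : ℝ) : Prop :=
  ∀ lam lam' : Ω → ℝ, gAdm L lam → gAdm L lam' → ∀ δ : ℝ, (∀ x, |lam x - lam' x| ≤ δ) →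
    ∀ x, |Real.log (gR ν r lam x) - Real.log (gR ν r lam' x)| ≤ c * δ

lemma gLip_two (hr : MeasurableSet {p : Ω × Ω | r p.1 p.2})
    (hs : ∀ x y, r x y → r y x) (L : ℝ) : gLip ν r L 2 := by
  intro lam lam' h h' δ hδ x
  rw [gLogR ν hr h, gLogR ν hr h']
  have h1 := gLogZ_crude ν hr hs h' h hδ
  have h2 := gLogZ_crude ν hr hs (h'.ok hr x) (h.ok hr x) (δ := δ) (fun y => by
    rw [← mul_sub, abs_mul, abs_of_nonneg (gOk_nonneg r x y)]
    exact (mul_le_of_le_one_left (abs_nonneg _) (gOk_le r x y)).trans (hδ y))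
  rw [abs_le] at *
  constructor <;> linarith [h1.1, h1.2, h2.1, h2.2]

lemma gOk_integrable (hr : MeasurableSet {p : Ω × Ω | r p.1 p.2}) (x : Ω) :
    Integrable (fun y => 1 - gOk r x y) ν :=
  Integrable.of_bound (C := 1) (measurable_const.sub (gOk_meas_right hr x)).aestronglyMeasurable
    (ae_of_all _ fun y => by
      rw [Real.norm_eq_abs, abs_le]
      constructor <;> linarith [gOk_nonneg r x y, gOk_le r x y])

lemma gInt_bd' (hr : MeasurableSet {p : Ω × Ω | r p.1 p.2}) {b : ℝ} {x : Ω}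
    (hb : ∫ y, (1 - gOk r x y) ∂ν ≤ b) {f : Ω → ℝ} {C : ℝ} (hC0 : 0 ≤ C)
    (hf : ∀ y, |f y| ≤ (1 - gOk r x y) * C) : |∫ x, f x ∂ν| ≤ b * C := by
  have h1 := norm_integral_le_of_norm_le (μ := ν) (f := f) ((gOk_integrable ν hr x).mul_const C)
    (ae_of_all _ hf)
  rw [integral_mul_const] at h1
  exact h1.trans (mul_le_mul_of_nonneg_right hb hC0)

lemma gLip_step (hr : MeasurableSet {p : Ω × Ω | r p.1 p.2})
    (hs : ∀ x y, r x y → r y x) {L b : ℝ} (hb : ∀ x, ∫ y, (1 - gOk r x y) ∂ν ≤ b)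
    {c : ℝ} (hc : 0 ≤ c) (hL : gLip ν r L c) : gLip ν r L (b * (1 + L * c)) := by
  intro lam lam' h h' δ hδ x
  have hδ0 : 0 ≤ δ := (abs_nonneg _).trans (hδ x)
  have hL0 : 0 ≤ L := (h.n x).trans (h.l x)
  rw [gLogR ν hr h, gLogR ν hr h']
  obtain ⟨s, hs1, he⟩ := exists_hasDerivAt_eq_slope _ _ (zero_lt_one (α := ℝ))
    (fun s hs1 => ((gLogZ_seg ν hr hs (h.ok hr x) h hs1).sub
      (gLogZ_seg ν hr hs (h'.ok hr x) h' hs1)).continuousAt.continuousWithinAt)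
    (fun s hs1 => (gLogZ_seg ν hr hs (h.ok hr x) h (Set.Ioo_subset_Icc_self hs1)).sub
      (gLogZ_seg ν hr hs (h'.ok hr x) h' (Set.Ioo_subset_Icc_self hs1)))
  have hs2 := Set.Ioo_subset_Icc_self hs1
  have ha := (h.ok hr x).seg h hs2
  have ha' := (h'.ok hr x).seg h' hs2
  simp only [Pi.sub_apply, zero_mul, add_zero, one_mul, add_sub_cancel, sub_zero, div_one] at he
  set R := gR ν r (fun y => gOk r x y * lam y + s * (lam y - gOk r x y * lam y)) with hR
  set R' := gR ν r (fun y => gOk r x y * lam' y + s * (lam' y - gOk r x y * lam' y)) with hR'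
  have hRp := gR_pos ν hr ha
  have hRl := gR_le ν hr ha
  have hRp' := gR_pos ν hr ha'
  have hRl' := gR_le ν hr ha'
  have hint : ∀ {lam R : Ω → ℝ}, gAdm L lam → Measurable R → (∀ y, 0 < R y) → (∀ y, R y ≤ 1) →
      Integrable (fun y => (lam y - gOk r x y * lam y) * R y) ν := by
    intro lam R h hm hp hl
    refine Integrable.of_bound (C := L) ((h.m.sub (h.ok hr x).m).mul hm).aestronglyMeasurable
      (ae_of_all _ fun y => ?_)
    have e1 := (h.ok hr x).n y
    have e2 := (h.ok hr x).l y
    rw [Real.norm_eq_abs, abs_mul, abs_of_pos (hp y)]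
    refine (mul_le_of_le_one_right (abs_nonneg _) (hl y)).trans ?_
    rw [abs_le]; constructor <;> linarith [h.n y, h.l y]
  rw [← integral_sub (hint h (gR_meas ν hr ha) hRp hRl) (hint h' (gR_meas ν hr ha') hRp' hRl')] at he
  have hbnd := gInt_bd' ν hr (hb x) (C := δ + L * (c * δ)) (by positivity) (f := fun y =>
    (lam y - gOk r x y * lam y) * R y - (lam' y - gOk r x y * lam' y) * R' y) (fun y => by
      have e : (lam y - gOk r x y * lam y) * R y - (lam' y - gOk r x y * lam' y) * R' y
        = (1 - gOk r x y) * ((lam y - lam' y) * R y + lam' y * (R y - R' y)) := by ring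
      have ho : 0 ≤ 1 - gOk r x y := sub_nonneg.2 (gOk_le r x y)
      rw [e, abs_mul, abs_of_nonneg ho]
      refine mul_le_mul_of_nonneg_left ((abs_add_le _ _).trans (add_le_add ?_ ?_)) ho
      · rw [abs_mul, abs_of_pos (hRp y)]
        exact (mul_le_of_le_one_right (abs_nonneg _) (hRl y)).trans (hδ y)
      · rw [abs_mul, abs_of_nonneg (h'.n y)]
        refine mul_le_mul (h'.l y) ?_ (abs_nonneg _) hL0
        refine (abs_sub_le_log (hRp y) (hRl y) (hRp' y) (hRl' y)).trans ?_
        refine hL _ _ ha ha' δ (fun w => ?_) y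
        have e2 : gOk r x w * lam w + s * (lam w - gOk r x w * lam w) -
          (gOk r x w * lam' w + s * (lam' w - gOk r x w * lam' w)) =
          (gOk r x w + s * (1 - gOk r x w)) * (lam w - lam' w) := by ring
        have o0 := gOk_nonneg r x w
        have o1 := gOk_le r x w
        have q0 : 0 ≤ gOk r x w + s * (1 - gOk r x w) :=
          add_nonneg o0 (mul_nonneg hs2.1 (sub_nonneg.2 o1))
        have q1 : gOk r x w + s * (1 - gOk r x w) ≤ 1 := by nlinarith [hs2.2]
        rw [e2, abs_mul, abs_of_nonneg q0]
        exact (mul_le_of_le_one_left (abs_nonneg _) q1).trans (hδ w))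
  rw [he] at hbnd
  rw [← abs_neg]
  convert hbnd using 1
  · congr 1; ring
  · ring

lemma gLip_final (hr : MeasurableSet {p : Ω × Ω | r p.1 p.2})
    (hs : ∀ x y, r x y → r y x) {L b : ℝ} (hb : ∀ x, ∫ y, (1 - gOk r x y) ∂ν ≤ b) (hb0 : 0 ≤ b)
    (hL0 : 0 ≤ L) (hLb : L * b ≤ 1/2) : gLip ν r L (2 * b) := by
  have key : ∀ n : ℕ, ∃ c : ℝ, 0 ≤ c ∧ c ≤ 2 * b + 2 * (1/2)^n ∧ gLip ν r L c := by
    intro n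
    induction n with
    | zero => exact ⟨2, by norm_num, by simpa using hb0, gLip_two ν hr hs L⟩
    | succ n ih =>
      obtain ⟨c, hc0, hc, hLip⟩ := ih
      refine ⟨b * (1 + L * c), by positivity, ?_, gLip_step ν hr hs hb hc0 hLip⟩
      have : b * (1 + L * c) = b + (L * b) * c := by ring
      rw [this, pow_succ]
      have h2 : (L * b) * c ≤ 1/2 * c := mul_le_mul_of_nonneg_right hLb hc0
      linarith
  intro lam lam' h h' δ hδ x
  have hδ0 : 0 ≤ δ := (abs_nonneg _).trans (hδ x)
  have hlim : Tendsto (fun n : ℕ => (2 * b + 2 * (1/2:ℝ)^n) * δ) atTop (𝓝 ((2 * b + 2 * 0) * δ)) := by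
    refine ((tendsto_const_nhds.add ((tendsto_pow_atTop_nhds_zero_of_lt_one (by norm_num) (by norm_num)).const_mul 2))).mul_const δ
  rw [mul_zero, add_zero] at hlim
  refine ge_of_tendsto hlim (Eventually.of_forall fun n => ?_)
  obtain ⟨c, hc0, hc, hLip⟩ := key n
  exact (hLip lam lam' h h' δ hδ x).trans (mul_le_mul_of_nonneg_right hc hδ0)

lemma gR_near_one (hr : MeasurableSet {p : Ω × Ω | r p.1 p.2})
    (hs : ∀ x y, r x y → r y x) {L b : ℝ} (hb : ∀ x, ∫ y, (1 - gOk r x y) ∂ν ≤ b)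
    {lam : Ω → ℝ} (h : gAdm L lam) (x : Ω) : |gR ν r lam x - 1| ≤ b * L := by
  have hL0 : 0 ≤ L := (h.n x).trans (h.l x)
  refine (abs_sub_le_log (gR_pos ν hr h x) (gR_le ν hr h x) one_pos le_rfl).trans ?_
  rw [Real.log_one, sub_zero, gLogR ν hr h, abs_sub_comm]
  obtain ⟨s, hs1, he⟩ := gLogZ_mvt ν hr hs (h.ok hr x) h
  rw [he]
  refine gInt_bd' ν hr (hb x) hL0 fun y => ?_
  have ha := (h.ok hr x).seg h hs1
  have ho : 0 ≤ 1 - gOk r x y := sub_nonneg.2 (gOk_le r x y)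
  have e : lam y - gOk r x y * lam y = (1 - gOk r x y) * lam y := by ring
  rw [e, abs_mul, abs_mul, abs_of_nonneg ho, abs_of_nonneg (h.n y), abs_of_pos (gR_pos ν hr ha y), mul_assoc]
  refine mul_le_mul_of_nonneg_left ?_ ho
  exact (mul_le_of_le_one_right (h.n y) (gR_le ν hr ha y)).trans (h.l y)

lemma gLogZ_expand (hr : MeasurableSet {p : Ω × Ω | r p.1 p.2})
    (hs : ∀ x y, r x y → r y x) {L b : ℝ} (hb : ∀ x, ∫ y, (1 - gOk r x y) ∂ν ≤ b) (hb0 : 0 ≤ b)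
    (hL0 : 0 ≤ L) (hLb : L * b ≤ 1/2) {lam lam' : Ω → ℝ} (h : gAdm L lam) (h' : gAdm L lam') {δ : ℝ}
    (hδ0 : 0 ≤ δ) (hδ : ∀ x, |lam' x - lam x| ≤ δ) :
    |Real.log (gZ ν r lam') - Real.log (gZ ν r lam) - ∫ y, (lam' y - lam y) * gR ν r lam y ∂ν|
      ≤ δ * (2 * b * δ) := by
  obtain ⟨s, hs1, he⟩ := gLogZ_mvt ν hr hs h h'
  have ha := h.seg h' hs1
  rw [he]
  have hint : ∀ {lam0 : Ω → ℝ}, gAdm L lam0 → Integrable (fun y => (lam' y - lam y) * gR ν r lam0 y) ν := by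
    intro lam0 h0
    refine Integrable.of_bound (C := δ) ((h'.m.sub h.m).mul (gR_meas ν hr h0)).aestronglyMeasurable
      (ae_of_all _ fun y => ?_)
    rw [Real.norm_eq_abs, abs_mul, abs_of_pos (gR_pos ν hr h0 y)]
    exact (mul_le_of_le_one_right (abs_nonneg _) (gR_le ν hr h0 y)).trans (hδ y)
  rw [← integral_sub (hint ha) (hint h)]
  refine gInt_bd ν fun y => ?_
  rw [← mul_sub, abs_mul]
  refine mul_le_mul (hδ y) ?_ (abs_nonneg _) hδ0
  refine (abs_sub_le_log (gR_pos ν hr ha y) (gR_le ν hr ha y) (gR_pos ν hr h y) (gR_le ν hr h y)).trans ?_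
  refine gLip_final ν hr hs hb hb0 hL0 hLb _ _ ha h δ (fun w => ?_) y
  rw [add_sub_cancel_left, abs_mul, abs_of_nonneg hs1.1]
  exact (mul_le_of_le_one_left (abs_nonneg _) hs1.2).trans (hδ w)

end Gibbs3
section Gibbs4

set_option linter.unusedSectionVars false
set_option linter.unusedVariables false

variable {Ω : Type*} [MeasurableSpace Ω] (ν : Measure Ω) [IsProbabilityMeasure ν]
  {r : Ω → Ω → Prop}

noncomputable def gMean (ν : Measure Ω) (r : Ω → Ω → Prop) (h : Ω → ℝ) (c : ℝ) : ℝ :=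
  ∫ y, h y * gR ν r (fun _ => c) y ∂ν

noncomputable def gX (ν : Measure Ω) (r : Ω → Ω → Prop) (h : Ω → ℝ) (c : ℝ) (N : ℕ) (z : Fin N → Ω) : ℝ :=
  (√c)⁻¹ * ∑ i, h (z i) - √c * gMean ν r h c

def gDom (r : Ω → Ω → Prop) (N : ℕ) : Set (Fin N → Ω) := {z | ∀ i j : Fin N, i ≠ j → r (z i) (z j)}

noncomputable def gP (ν : Measure Ω) (r : Ω → Ω → Prop) (h : Ω → ℝ) (c : ℝ) : Measure ℝ :=
  Measure.sum fun N : ℕ => ENNReal.ofReal ((gZ ν r fun _ => c)⁻¹ * (c ^ N / N.factorial)) •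
    (((Measure.pi fun _ : Fin N => ν).restrict (gDom r N)).map (gX ν r h c N))

lemma gDom_meas (hr : MeasurableSet {p : Ω × Ω | r p.1 p.2}) (N : ℕ) : MeasurableSet (gDom r N) := by
  have : gDom r N =
      ⋂ i : Fin N, ⋂ j : Fin N, ⋂ _ : i ≠ j, (fun z : Fin N → Ω => (z i, z j)) ⁻¹' {p | r p.1 p.2} := by
    ext z; simp [gDom]
  rw [this]
  refine MeasurableSet.iInter fun i => MeasurableSet.iInter fun j => MeasurableSet.iInter fun _ => ?_
  exact ((measurable_pi_apply i).prodMk (measurable_pi_apply j)) hr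

lemma gX_meas {h : Ω → ℝ} (hm : Measurable h) (c : ℝ) (N : ℕ) : Measurable (gX ν r h c N) := by
  unfold gX
  exact ((Finset.measurable_sum _ fun i _ => hm.comp (measurable_pi_apply i)).const_mul _).sub_const _

lemma gEx_smul {E : Type*} [NormedAddCommGroup E] [NormedSpace ℝ E] (N : ℕ)
    (f : (Fin N → Ω) → E) (z : Fin N → Ω) : gEx r N z • f z = (gDom r N).indicator f z := by
  classical
  unfold gEx gDom Set.indicator
  simp only [Set.mem_ofPred_eq]
  split_ifs <;> simp

lemma gX_bound {h : Ω → ℝ} {B : ℝ} (hB : ∀ x, |h x| ≤ B) (c : ℝ) (N : ℕ) (z : Fin N → Ω) :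
    |gX ν r h c N z| ≤ N * ((√c)⁻¹ * B) + |√c * gMean ν r h c| := by
  unfold gX
  refine (abs_sub _ _).trans (add_le_add ?_ le_rfl)
  rw [abs_mul, abs_of_nonneg (by positivity : 0 ≤ (√c)⁻¹)]
  have : |∑ i, h (z i)| ≤ N * B := by
    refine (Finset.abs_sum_le_sum_abs _ _).trans ?_
    calc _ ≤ ∑ i : Fin N, B := Finset.sum_le_sum fun i _ => hB _
      _ = _ := by simp
  calc _ ≤ (√c)⁻¹ * (N * B) := by gcongr
    _ = _ := by ring

lemma gP_intN (hr : MeasurableSet {p : Ω × Ω | r p.1 p.2}) {h : Ω → ℝ} (hm : Measurable h) {c : ℝ} {N : ℕ}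
    (hw : 0 ≤ (gZ ν r fun _ => c)⁻¹ * (c ^ N / N.factorial))
    {E : Type*} [NormedAddCommGroup E] [NormedSpace ℝ E] (f : ℝ → E) (hf : StronglyMeasurable f) :
      ∫ x, f x ∂(ENNReal.ofReal ((gZ ν r fun _ => c)⁻¹ * (c ^ N / N.factorial)) •
    (((Measure.pi fun _ : Fin N => ν).restrict (gDom r N)).map (gX ν r h c N))) =
    ((gZ ν r fun _ => c)⁻¹ * (c ^ N / N.factorial)) •
      ∫ z, gEx r N z • f (gX ν r h c N z) ∂(Measure.pi fun _ : Fin N => ν) := by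
  rw [integral_smul_measure, ENNReal.toReal_ofReal hw,
    integral_map (gX_meas ν hm c N).aemeasurable hf.aestronglyMeasurable]
  simp_rw [gEx_smul N (fun z => f (gX ν r h c N z))]
  rw [integral_indicator (gDom_meas hr N)]

lemma gP_int (hr : MeasurableSet {p : Ω × Ω | r p.1 p.2}) {h : Ω → ℝ} (hm : Measurable h) {B : ℝ}
    (hB : ∀ x, |h x| ≤ B) {c : ℝ} (hc : 0 < c)
    {E : Type*} [NormedAddCommGroup E] [NormedSpace ℝ E] [CompleteSpace E]
    {f : ℝ → E} (hf : StronglyMeasurable f) {A : ℝ} (hA : 0 ≤ A)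
    (hfb : ∀ x, ‖f x‖ ≤ Real.exp (A * |x|)) :
    Integrable f (gP ν r h c) ∧ HasSum (fun N : ℕ => ((gZ ν r fun _ => c)⁻¹ * (c ^ N / N.factorial)) •
      ∫ z, gEx r N z • f (gX ν r h c N z) ∂(Measure.pi fun _ : Fin N => ν)) (∫ x, f x ∂(gP ν r h c)) := by
  have hZ : 1 ≤ gZ ν r fun _ => c := gZ_ge_one ν r (fun _ => hc.le) (fun _ => (abs_of_pos hc).le)
  have hw : ∀ N : ℕ, 0 ≤ (gZ ν r fun _ => c)⁻¹ * (c ^ N / N.factorial) := fun N => by positivity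
  have hptb : ∀ N (z : Fin N → Ω), ‖f (gX ν r h c N z)‖ ≤
      Real.exp (A * ((√c)⁻¹ * B)) ^ N * Real.exp (A * |√c * gMean ν r h c|) := by
    intro N z
    refine (hfb _).trans ?_
    rw [← Real.exp_nat_mul, ← Real.exp_add]
    refine Real.exp_le_exp.2 ?_
    have := mul_le_mul_of_nonneg_left (gX_bound ν (r := r) hB c N z) hA
    linarith
  have hint : Integrable f (gP ν r h c) := by
    refine integrable_sum_measure (fun N => ?_) ?_
    · refine Integrable.smul_measure ?_ ENNReal.ofReal_ne_top
      rw [integrable_map_measure hf.aestronglyMeasurable (gX_meas ν hm c N).aemeasurable]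
      exact Integrable.of_bound (hf.comp_measurable (gX_meas ν hm c N)).aestronglyMeasurable _
        (ae_of_all _ (hptb N))
    · refine Summable.of_norm_bounded (g := fun N : ℕ => ((gZ ν r fun _ => c)⁻¹ * Real.exp (A * |√c * gMean ν r h c|)) *
        (((N.factorial : ℝ))⁻¹ * (c * Real.exp (A * ((√c)⁻¹ * B))) ^ N)) ((gsummable_pow _).mul_left _) fun N => ?_
      rw [gP_intN ν hr hm (hw N) (fun x => ‖f x‖) hf.norm, norm_smul, Real.norm_of_nonneg (hw N)]
      have : ‖∫ z, gEx r N z • ‖f (gX ν r h c N z)‖ ∂(Measure.pi fun _ : Fin N => ν)‖ ≤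
        Real.exp (A * ((√c)⁻¹ * B)) ^ N * Real.exp (A * |√c * gMean ν r h c|) := by
        refine (norm_integral_le_of_norm_le_const (C := Real.exp (A * ((√c)⁻¹ * B)) ^ N * Real.exp (A * |√c * gMean ν r h c|))
          (ae_of_all _ fun z => ?_)).trans (by rw [probReal_univ, mul_one])
        rw [norm_smul, Real.norm_of_nonneg (gEx_nonneg _ _ _), norm_norm]
        exact (mul_le_of_le_one_left (norm_nonneg _) (gEx_le _ _ _)).trans (hptb N z)
      refine (mul_le_mul_of_nonneg_left this (hw N)).trans (le_of_eq ?_)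
      rw [mul_pow]; ring
  refine ⟨hint, ?_⟩
  have := hasSum_integral_measure hint
  simp only [gP_intN ν hr hm (hw _) f hf] at this
  exact this

lemma gP_mgf (hr : MeasurableSet {p : Ω × Ω | r p.1 p.2}) {h : Ω → ℝ} (hm : Measurable h) {B : ℝ}
    (hB : ∀ x, |h x| ≤ B) {c : ℝ} (hc : 0 < c) (t : ℝ) :
    Integrable (fun x => Real.exp (t * x)) (gP ν r h c) ∧ ∫ x, Real.exp (t * x) ∂(gP ν r h c) =
      Real.exp (-(t * √c * gMean ν r h c)) * (gZ ν r fun x => c * Real.exp (t * (√c)⁻¹ * h x)) / gZ ν r fun _ => c := by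
  have := gP_int ν hr hm hB hc (f := fun x => Real.exp (t * x)) (by fun_prop) (abs_nonneg t) (fun x => by
    rw [Real.norm_of_nonneg (Real.exp_pos _).le]
    refine Real.exp_le_exp.2 ?_
    rw [← abs_mul]; exact le_abs_self _)
  refine ⟨this.1, ?_⟩
  rw [← this.2.tsum_eq]
  generalize (gZ ν r fun _ => c) = Z0
  rw [mul_div_assoc, gZ, div_eq_inv_mul, ← tsum_mul_left, ← tsum_mul_left]
  congr 1; ext N
  have e : ∀ z : Fin N → Ω, gEx r N z • Real.exp (t * gX ν r h c N z) =
      Real.exp (-(t * √c * gMean ν r h c)) * (gEx r N z * ∏ i, Real.exp (t * (√c)⁻¹ * h (z i))) := by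
    intro z
    have : t * gX ν r h c N z = -(t * √c * gMean ν r h c) + ∑ i, t * (√c)⁻¹ * h (z i) := by
      unfold gX; rw [← Finset.mul_sum]; ring
    rw [this, Real.exp_add, Real.exp_sum, smul_eq_mul]; ring
  simp_rw [e]
  unfold gW
  simp_rw [Finset.prod_mul_distrib]
  simp only [Finset.prod_const, Finset.card_univ, Fintype.card_fin]
  rw [integral_const_mul]
  have e2 : ∀ z : Fin N → Ω, gEx r N z * (c ^ N * ∏ i, Real.exp (t * (√c)⁻¹ * h (z i))) =
    c ^ N * (gEx r N z * ∏ i, Real.exp (t * (√c)⁻¹ * h (z i))) := fun z => by ring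
  simp_rw [e2]
  rw [integral_const_mul, smul_eq_mul]
  field_simp

lemma gP_logmgf (hr : MeasurableSet {p : Ω × Ω | r p.1 p.2}) (hs : ∀ x y, r x y → r y x)
    {h : Ω → ℝ} (hm : Measurable h) {B : ℝ} (hB0 : 0 ≤ B)
    (hB : ∀ x, |h x| ≤ B) {c : ℝ} (hc : 0 < c) {b : ℝ} (hb0 : 0 ≤ b)
    (hb : ∀ x, ∫ y, (1 - gOk r x y) ∂ν ≤ b) (t U : ℝ) (hU : U = |t| * (√c)⁻¹ * B) (hU1 : U ≤ 1)
    (hcb : 3 * c * b ≤ 1/2) :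
    ∃ e : ℝ, |e| ≤ c * U ^ 3 + c * U ^ 2 * (b * (3 * c)) + 2 * c * U * (2 * b * (2 * c * U)) ∧
      ∫ x, Real.exp (t * x) ∂(gP ν r h c) = Real.exp (t ^ 2 / 2 * (∫ y, h y ^ 2 ∂ν) + e) := by
  have hU0 : 0 ≤ U := by rw [hU]; positivity
  set u : Ω → ℝ := fun y => t * (√c)⁻¹ * h y with hu
  have hum : Measurable u := hm.const_mul _
  have huU : ∀ y, |u y| ≤ U := fun y => by
    rw [hu, hU]; simp only
    rw [abs_mul, abs_mul, abs_of_nonneg (by positivity : 0 ≤ (√c)⁻¹)]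
    gcongr; exact hB y
  have hu1 : ∀ y, |u y| ≤ 1 := fun y => (huU y).trans hU1
  have h0 : gAdm (3 * c) (fun _ : Ω => c) := ⟨measurable_const, fun _ => hc.le, fun _ => by linarith⟩
  have h1 : gAdm (3 * c) (fun y : Ω => c * Real.exp (u y)) := ⟨by fun_prop, fun _ => by positivity, fun y => by
    have : Real.exp (u y) ≤ 3 := by
      calc Real.exp (u y) ≤ Real.exp 1 := Real.exp_le_exp.2 ((le_abs_self _).trans (hu1 y))
        _ ≤ 3 := Real.exp_one_lt_three.le
    nlinarith⟩
  have hZ0 := gZ_ge_one ν r h0.n h0.a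
  have hZ1 := gZ_ge_one ν r h1.n h1.a
  have hδ : ∀ y, |c * Real.exp (u y) - c| ≤ 2 * c * U := fun y => by
    have := Real.abs_exp_sub_one_le (hu1 y)
    have e : c * Real.exp (u y) - c = c * (Real.exp (u y) - 1) := by ring
    rw [e, abs_mul, abs_of_pos hc]
    nlinarith [huU y]
  have hexp := gLogZ_expand ν hr hs hb hb0 (by positivity) hcb h0 h1 (by positivity) hδ
  set R := gR ν r (fun _ : Ω => c) with hR
  have hRp := gR_pos ν hr h0
  have hRl := gR_le ν hr h0
  have hRm := gR_meas ν hr h0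
  set A := Real.log (gZ ν r fun y => c * Real.exp (u y)) - Real.log (gZ ν r fun _ => c) with hA
  have hsqrt : √c * √c = c := Real.mul_self_sqrt hc.le
  have hsq0 : √c ≠ 0 := (Real.sqrt_pos.2 hc).ne'
  refine ⟨A - t * √c * gMean ν r h c - t ^ 2 / 2 * ∫ y, h y ^ 2 ∂ν, ?_, ?_⟩
  · have hi1 : Integrable (fun y => (c * Real.exp (u y) - c) * R y) ν := by
      refine Integrable.of_bound (C := 2 * c * U) ((h1.m.sub_const c).mul hRm).aestronglyMeasurable
        (ae_of_all _ fun y => ?_)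
      rw [Real.norm_eq_abs, abs_mul, abs_of_pos (hRp y)]
      exact (mul_le_of_le_one_right (abs_nonneg _) (hRl y)).trans (hδ y)
    have hi2 : Integrable (fun y => h y * R y) ν := by
      refine Integrable.of_bound (C := B) (hm.mul hRm).aestronglyMeasurable
        (ae_of_all _ fun y => ?_)
      rw [Real.norm_eq_abs, abs_mul, abs_of_pos (hRp y)]
      exact (mul_le_of_le_one_right (abs_nonneg _) (hRl y)).trans (hB y)
    have hi3 : Integrable (fun y => h y ^ 2) ν := by
      refine Integrable.of_bound (C := B^2) (hm.pow_const 2).aestronglyMeasurable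
        (ae_of_all _ fun y => ?_)
      rw [Real.norm_eq_abs, abs_pow]
      exact pow_le_pow_left₀ (abs_nonneg _) (hB y) 2
    have hcomb : (∫ y, (c * Real.exp (u y) - c) * R y ∂ν) - t * √c * gMean ν r h c
        - t ^ 2 / 2 * ∫ y, h y ^ 2 ∂ν = ∫ y, (c * Real.exp (u y) - c) * R y - t * √c * (h y * R y)
          - t^2/2 * h y ^ 2 ∂ν := by
      have hi12 : Integrable (fun y => (c * Real.exp (u y) - c) * R y - t * √c * (h y * R y)) ν :=
        hi1.sub (hi2.const_mul _)
      rw [integral_sub hi12 (hi3.const_mul _), integral_sub hi1 (hi2.const_mul _),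
        integral_const_mul, integral_const_mul, gMean]
    have hb2 : |∫ y, (c * Real.exp (u y) - c) * R y - t * √c * (h y * R y)
          - t^2/2 * h y ^ 2 ∂ν| ≤ c * U ^ 3 + c * U ^ 2 * (b * (3 * c)) := by
      refine gInt_bd ν fun y => ?_
      have e1 : t * √c * h y = c * u y := by
        simp only [hu]; nth_rewrite 2 [← hsqrt]; field_simp
      have e2 : t ^ 2 * h y ^ 2 = c * u y ^ 2 := by
        simp only [hu]; nth_rewrite 1 [← hsqrt]; field_simp
      have e3 : (c * Real.exp (u y) - c) * R y - t * √c * (h y * R y) - t^2/2 * h y ^ 2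
        = c * ((Real.exp (u y) - (1 + u y + u y ^ 2 / 2)) * R y) + c * (u y ^ 2 / 2 * (R y - 1)) := by
        linear_combination (- R y) * e1 - e2 / 2
      have e4 : |Real.exp (u y) - (1 + u y + u y ^ 2 / 2)| ≤ U ^ 3 := by
        have := Real.exp_bound (hu1 y) (n := 3) (by norm_num)
        simp only [Finset.sum_range_succ, Finset.sum_range_zero, Nat.factorial] at this
        norm_num at this
        refine this.trans ?_
        have : |u y| ^ 3 ≤ U ^ 3 := pow_le_pow_left₀ (abs_nonneg _) (huU y) 3
        have : 0 ≤ |u y| ^ 3 := by positivity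
        linarith
      have e5 := gR_near_one ν hr hs hb h0 y
      have e6 : |u y ^ 2 / 2| ≤ U ^ 2 := by
        rw [abs_of_nonneg (by positivity), ← sq_abs]
        have : |u y| ^ 2 ≤ U ^ 2 := pow_le_pow_left₀ (abs_nonneg _) (huU y) 2
        nlinarith [sq_nonneg (|u y|)]
      rw [e3]
      refine (abs_add_le _ _).trans (add_le_add ?_ ?_)
      · rw [abs_mul, abs_of_pos hc, abs_mul, abs_of_pos (hRp y)]
        refine mul_le_mul_of_nonneg_left ?_ hc.le
        exact (mul_le_of_le_one_right (abs_nonneg _) (hRl y)).trans e4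
      · rw [abs_mul, abs_of_pos hc, abs_mul, mul_assoc]
        refine mul_le_mul_of_nonneg_left ?_ hc.le
        exact mul_le_mul e6 e5 (abs_nonneg _) (by positivity)
    rw [← hcomb] at hb2
    rw [abs_le] at hb2 hexp ⊢
    constructor <;> linarith [hb2.1, hb2.2, hexp.1, hexp.2]
  · rw [(gP_mgf ν hr hm hB hc t).2]
    have e : t ^ 2 / 2 * (∫ y, h y ^ 2 ∂ν) + (A - t * √c * gMean ν r h c - t ^ 2 / 2 * ∫ y, h y ^ 2 ∂ν)
      = -(t * √c * gMean ν r h c) + A := by ring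
    rw [e, Real.exp_add, hA, Real.exp_sub, Real.exp_log (by positivity), Real.exp_log (by positivity), mul_div_assoc]

end Gibbs4
section Gibbs5

open ProbabilityTheory in
lemma gP_clt {Ω : Type*} [MeasurableSpace Ω] (ν : Measure Ω) [IsProbabilityMeasure ν]
    {ι : Type*} {l : Filter ι} [l.NeBot] (r : ι → Ω → Ω → Prop) (c b : ι → ℝ)
    (hr : ∀ i, MeasurableSet {p : Ω × Ω | r i p.1 p.2}) (hs : ∀ i x y, r i x y → r i y x)
    {h : Ω → ℝ} (hm : Measurable h) {B : ℝ} (hB0 : 0 ≤ B) (hB : ∀ x, |h x| ≤ B)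
    (hc : Tendsto c l atTop) (hb0 : ∀ᶠ i in l, 0 ≤ b i)
    (hb : ∀ᶠ i in l, ∀ x, ∫ y, (1 - gOk (r i) x y) ∂ν ≤ b i)
    (hcb : Tendsto (fun i => c i * b i) l (𝓝 0)) (ξ : ℝ) :
    Tendsto (fun i => ∫ x : ℝ, Complex.exp (Complex.I * ξ * x) ∂(gP ν (r i) h (c i))) l
      (𝓝 (Complex.exp (-(ξ : ℂ) ^ 2 * ((∫ y, h y ^ 2 ∂ν : ℝ) : ℂ) / 2))) := by
  set S := ∫ y, h y ^ 2 ∂ν with hS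
  have hcpos : ∀ᶠ i in l, 0 < c i := hc.eventually_gt_atTop 0
  have hsq : Tendsto (fun i => (√(c i))⁻¹) l (𝓝 0) :=
    (Real.tendsto_sqrt_atTop.comp hc).inv_tendsto_atTop
  have hlim : ∀ t : ℝ, Tendsto (fun i => ∫ x, Real.exp (t * x) ∂(gP ν (r i) h (c i))) l
      (𝓝 (Real.exp (t ^ 2 / 2 * S))) := by
    intro t
    have hU : Tendsto (fun i => |t| * (√(c i))⁻¹ * B) l (𝓝 0) := by
      simpa using (hsq.const_mul |t|).mul_const B
    have ev : ∀ᶠ i in l, ∃ e : ℝ, |e| ≤ (|t| * B) ^ 3 * (√(c i))⁻¹ + 11 * (|t| * B) ^ 2 * (c i * b i) ∧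
        ∫ x, Real.exp (t * x) ∂(gP ν (r i) h (c i)) = Real.exp (t ^ 2 / 2 * S + e) := by
      filter_upwards [hcpos, hb0, hb, hU.eventually_le_const one_pos,
        hcb.eventually_le_const (show (0:ℝ) < 1/6 by norm_num)] with i h1 h2 h3 h4 h5
      obtain ⟨e, he, he2⟩ := gP_logmgf ν (hr i) (hs i) hm hB0 hB h1 h2 h3 t _ rfl h4 (by linarith)
      refine ⟨e, he.trans (le_of_eq ?_), he2⟩
      have hs0 : 0 < √(c i) := Real.sqrt_pos.2 h1
      have hss : c i = √(c i) ^ 2 := (Real.sq_sqrt h1.le).symm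
      generalize √(c i) = q at *
      rw [hss]; field_simp; ring
    have ev2 : ∀ᶠ i in l, |Real.log (∫ x, Real.exp (t * x) ∂(gP ν (r i) h (c i))) - t ^ 2 / 2 * S| ≤
        (|t| * B) ^ 3 * (√(c i))⁻¹ + 11 * (|t| * B) ^ 2 * (c i * b i) := by
      filter_upwards [ev] with i ⟨e, he, he2⟩
      rw [he2, Real.log_exp]; simpa using he
    have l0 : Tendsto (fun i => (|t| * B) ^ 3 * (√(c i))⁻¹ + 11 * (|t| * B) ^ 2 * (c i * b i)) l (𝓝 0) := by
      simpa using (hsq.const_mul ((|t| * B) ^ 3)).add (hcb.const_mul (11 * (|t| * B) ^ 2))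
    have l1 : Tendsto (fun i => Real.log (∫ x, Real.exp (t * x) ∂(gP ν (r i) h (c i)))) l (𝓝 (t ^ 2 / 2 * S)) := by
      rw [tendsto_iff_dist_tendsto_zero]
      exact squeeze_zero' (Eventually.of_forall fun _ => dist_nonneg) ev2 l0
    refine ((Real.continuous_exp.tendsto _).comp l1).congr' ?_
    filter_upwards [ev] with i ⟨e, he, he2⟩
    simp only [Function.comp]
    rw [he2, Real.log_exp]
  have hG : Differentiable ℂ (fun z : ℂ => Complex.exp (z ^ 2 / 2 * (S : ℂ))) := by fun_prop
  have hF : ∀ᶠ i in l, Differentiable ℂ (complexMGF id (gP ν (r i) h (c i))) := by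
    filter_upwards [hcpos] with i hi z
    have hz : z.re ∈ interior (integrableExpSet id (gP ν (r i) h (c i))) := by
      have : integrableExpSet id (gP ν (r i) h (c i)) = Set.univ :=
        Set.eq_univ_of_forall fun t => (gP_mgf ν (hr i) hm hB hi t).1
      rw [this]; simp
    exact (hasDerivAt_complexMGF hz).differentiableAt
  have hbd : ∀ R, ∃ M, ∀ᶠ i in l, ∀ z : ℂ, ‖z‖ ≤ R → ‖complexMGF id (gP ν (r i) h (c i)) z‖ ≤ M := by
    intro R
    refine ⟨(Real.exp (R ^ 2 / 2 * S) + 1) + (Real.exp ((-R) ^ 2 / 2 * S) + 1), ?_⟩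
    filter_upwards [hcpos, (hlim R).eventually_le_const (lt_add_one _),
      (hlim (-R)).eventually_le_const (lt_add_one _)] with i hi h1 h2 z hz
    refine norm_complexMGF_le_mgf.trans (le_trans ?_ (add_le_add h1 h2))
    have i1 := (gP_mgf ν (hr i) hm hB hi R).1
    have i2 := (gP_mgf ν (hr i) hm hB hi (-R)).1
    rw [← integral_add i1 i2]
    refine integral_mono (gP_mgf ν (hr i) hm hB hi z.re).1 (i1.add i2) fun x => ?_
    have hx : |z.re| ≤ R := (Complex.abs_re_le_norm z).trans hz
    rw [abs_le] at hx
    simp only [id]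
    rcases le_total 0 x with h0 | h0
    · have : Real.exp (z.re * x) ≤ Real.exp (R * x) := Real.exp_le_exp.2 (by nlinarith)
      linarith [Real.exp_pos (-R * x)]
    · have : Real.exp (z.re * x) ≤ Real.exp (-R * x) := Real.exp_le_exp.2 (by nlinarith)
      linarith [Real.exp_pos (R * x)]
  have key := vitali_entire (l := l) (fun i => complexMGF id (gP ν (r i) h (c i))) _ hF hG hbd (fun t => by
    have := (Complex.continuous_ofReal.tendsto _).comp (hlim t)
    convert! this using 1
    · ext i; rw [complexMGF_ofReal]; rfl
    · push_cast; rfl) (Complex.I * ξ)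
  convert! key using 2
  rw [mul_pow, Complex.I_sq]; congr 1; ring

end Gibbs5
section Concrete

lemma gPiDens {Ω : Type*} [MeasurableSpace Ω] (μ : Measure Ω) [SigmaFinite μ] {m : Ω → ℝ}
    (hm : Measurable m) (h0 : ∀ x, 0 ≤ m x) (hi : Integrable m μ) (N : ℕ) :
    Measure.pi (fun _ : Fin N => μ.withDensity fun x => ENNReal.ofReal (m x)) =
      (Measure.pi fun _ : Fin N => μ).withDensity fun Z => ENNReal.ofReal (∏ i, m (Z i)) := by
  have : IsFiniteMeasure (μ.withDensity fun x => ENNReal.ofReal (m x)) := isFiniteMeasure_withDensity_ofReal hi.2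
  refine Measure.pi_eq fun s hs => ?_
  rw [withDensity_apply _ (MeasurableSet.univ_pi hs), Measure.restrict_pi_pi]
  have hI : Integrable (fun Z : Fin N → Ω => ∏ i, m (Z i)) (Measure.pi fun i => μ.restrict (s i)) :=
    Integrable.fintype_prod (f := fun _ => m) fun i => hi.restrict
  rw [← ofReal_integral_eq_lintegral_ofReal hI (ae_of_all _ fun Z => Finset.prod_nonneg fun i _ => h0 _),
    integral_fintype_prod_eq_prod (f := fun _ => m), ENNReal.ofReal_prod_of_nonneg fun i _ => integral_nonneg h0]
  refine Finset.prod_congr rfl fun i _ => ?_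
  rw [withDensity_apply _ (hs i), ofReal_integral_eq_lintegral_ofReal hi.restrict (ae_of_all _ h0)]

lemma maxwellian_nonneg {d : ℕ} (v : EuclideanSpace ℝ (Fin d)) : 0 ≤ maxwellian v := by
  unfold maxwellian; positivity

lemma maxwellian_meas {d : ℕ} : Measurable (maxwellian (d := d)) := by
  unfold maxwellian; fun_prop

lemma maxwellian_int {d : ℕ} : ∫ v : EuclideanSpace ℝ (Fin d), maxwellian v = 1 := by
  unfold maxwellian
  rw [integral_const_mul]
  have := GaussianFourier.integral_rexp_neg_mul_sq_norm (V := EuclideanSpace ℝ (Fin d)) (b := 1/2) (by norm_num)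
  have e : ∀ v : EuclideanSpace ℝ (Fin d), -‖v‖ ^ 2 / 2 = -(1/2) * ‖v‖^2 := fun v => by ring
  simp_rw [e]
  rw [this, finrank_euclideanSpace_fin]
  have e2 : π / (1/2) = 2 * π := by ring
  rw [e2, ← Real.rpow_add (by positivity)]
  have : -(d:ℝ)/2 + d/2 = 0 := by ring
  rw [this, Real.rpow_zero]

lemma maxwellian_integrable {d : ℕ} : Integrable (maxwellian (d := d)) := by
  refine Integrable.of_integral_ne_zero ?_
  rw [maxwellian_int]; norm_num

instance gTorus1 : IsProbabilityMeasure (volume : Measure (AddCircle (1:ℝ))) := ⟨by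
  rw [AddCircle.measure_univ, ENNReal.ofReal_one]⟩

instance gTorusP (d : ℕ) : IsProbabilityMeasure (volume : Measure (Torus d)) := by
  unfold Torus; infer_instance

noncomputable def gMax (d : ℕ) : Measure (EuclideanSpace ℝ (Fin d)) :=
  volume.withDensity fun v => ENNReal.ofReal (maxwellian v)

instance gMaxP (d : ℕ) : IsProbabilityMeasure (gMax d) := ⟨by
  rw [gMax, withDensity_apply _ MeasurableSet.univ, Measure.restrict_univ,
    ← ofReal_integral_eq_lintegral_ofReal maxwellian_integrable (ae_of_all _ maxwellian_nonneg), maxwellian_int,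
    ENNReal.ofReal_one]⟩

noncomputable def gNu (d : ℕ) : Measure (Phase d) := (volume : Measure (Torus d)).prod (gMax d)

instance gNuP (d : ℕ) : IsProbabilityMeasure (gNu d) := by unfold gNu; infer_instance

lemma gNu_eq (d : ℕ) : gNu d = volume.withDensity fun z : Phase d => ENNReal.ofReal (maxwellian z.2) := by
  rw [gNu, gMax, prod_withDensity_right (maxwellian_meas.ennreal_ofReal)]; rfl

lemma gM2_integrable (d : ℕ) : Integrable (fun z : Phase d => maxwellian z.2) := by
  have := (integrable_const (μ := (volume : Measure (Torus d))) (1:ℝ)).mul_prod (maxwellian_integrable (d := d))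
  simp only [one_mul] at this
  exact this

lemma gNu_pi (d N : ℕ) : Measure.pi (fun _ : Fin N => gNu d) =
    (volume : Measure (Fin N → Phase d)).withDensity fun Z => ENNReal.ofReal (∏ i, maxwellian (Z i).2) := by
  rw [gNu_eq]
  exact gPiDens volume (maxwellian_meas.comp measurable_snd) (fun x => maxwellian_nonneg _) (gM2_integrable d) N

lemma gNu_pi_int (d N : ℕ) {E : Type*} [NormedAddCommGroup E] [NormedSpace ℝ E] (F : (Fin N → Phase d) → E) :
    ∫ Z, F Z ∂(Measure.pi (fun _ : Fin N => gNu d)) = ∫ Z, (∏ i, maxwellian (Z i).2) • F Z := by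
  rw [gNu_pi, integral_withDensity_eq_integral_toReal_smul]
  · congr 1; ext Z
    rw [ENNReal.toReal_ofReal (Finset.prod_nonneg fun i _ => maxwellian_nonneg _)]
  · exact (Finset.measurable_prod _ fun i _ =>
      maxwellian_meas.comp (measurable_snd.comp (measurable_pi_apply i))).ennreal_ofReal
  · exact ae_of_all _ fun _ => ENNReal.ofReal_lt_top

lemma gNu_int (d : ℕ) (F : Phase d → ℝ) : ∫ z, F z ∂(gNu d) = ∫ z, F z * maxwellian z.2 := by
  rw [gNu_eq, integral_withDensity_eq_integral_toReal_smul]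
  · congr 1; ext Z
    rw [ENNReal.toReal_ofReal (maxwellian_nonneg _), smul_eq_mul, mul_comm]
  · exact (maxwellian_meas.comp measurable_snd).ennreal_ofReal
  · exact ae_of_all _ fun _ => ENNReal.ofReal_lt_top

def gRel (d : ℕ) (ε : ℝ) (z w : Phase d) : Prop := ε < torusDist z.1 w.1

lemma torusDist_cont (d : ℕ) : Continuous fun p : Torus d × Torus d => torusDist p.1 p.2 := by
  unfold torusDist; fun_prop

lemma torusDist_symm {d : ℕ} (x y : Torus d) : torusDist x y = torusDist y x := by
  unfold torusDist; simp_rw [dist_comm]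

lemma gRel_meas (d : ℕ) (ε : ℝ) : MeasurableSet {p : Phase d × Phase d | gRel d ε p.1 p.2} := by
  have hS : MeasurableSet {p : Torus d × Torus d | ε < torusDist p.1 p.2} :=
    measurableSet_lt measurable_const (torusDist_cont d).measurable
  have hf : Measurable fun p : Phase d × Phase d => (p.1.1, p.2.1) :=
    (measurable_fst.comp measurable_fst).prodMk (measurable_fst.comp measurable_snd)
  exact hf hS

lemma gRel_symm (d : ℕ) (ε : ℝ) (z w : Phase d) (hh : gRel d ε z w) : gRel d ε w z := by
  unfold gRel at *; rwa [torusDist_symm]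

lemma exclInd_eq {d : ℕ} (ε : ℝ) {N : ℕ} (Z : Fin N → Phase d) :
    exclInd ε (fun i => (Z i).1) = gEx (gRel d ε) N Z := rfl

lemma exclInd_meas {d : ℕ} (ε : ℝ) {N : ℕ} : Measurable (exclInd (d := d) ε (N := N)) := by
  have : MeasurableSet {p : Torus d × Torus d | ε < torusDist p.1 p.2} :=
    measurableSet_lt measurable_const (torusDist_cont d).measurable
  exact gEx_meas (r := fun x y : Torus d => ε < torusDist x y) this N

lemma partitionZ_eq (d : ℕ) (ε : ℝ) : partitionZ d ε = gZ (gNu d) (gRel d ε) fun _ => muBG d ε := by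
  unfold partitionZ gZ gW
  congr 1; ext N
  have mp : MeasurePreserving (fun (Z : Fin N → Phase d) i => (Z i).1) (Measure.pi fun _ => gNu d)
      (Measure.pi fun _ : Fin N => (volume : Measure (Torus d))) :=
    measurePreserving_pi (fun _ : Fin N => gNu d) (fun _ => (volume : Measure (Torus d)))
      (f := fun _ => Prod.fst) fun i => by unfold gNu; exact measurePreserving_fst
  have e : ∫ X : Fin N → Torus d, exclInd ε X = ∫ Z, gEx (gRel d ε) N Z ∂(Measure.pi fun _ : Fin N => gNu d) := by
    rw [volume_pi, ← mp.map_eq, integral_map mp.measurable.aemeasurable (exclInd_meas ε).aestronglyMeasurable]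
    rfl
  rw [e]
  simp only [Finset.prod_const, Finset.card_univ, Fintype.card_fin]
  rw [integral_mul_const]; ring

lemma gExcl_bound (d : ℕ) {ε : ℝ} (hε : 0 < ε) (x : Phase d) :
    ∫ y, (1 - gOk (gRel d ε) x y) ∂(gNu d) ≤ (2 * ε) ^ d := by
  classical
  set S : Set (Torus d) := Set.univ.pi fun i => Metric.closedBall (x.1 i) ε with hS
  have hSm : MeasurableSet S := MeasurableSet.univ_pi fun i => Metric.isClosed_closedBall.measurableSet
  have hle : ∀ y : Phase d, 1 - gOk (gRel d ε) x y ≤ (S.indicator (fun _ => (1:ℝ)) y.1) := by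
    intro y
    by_cases hy : gRel d ε x y
    · have : gOk (gRel d ε) x y = 1 := by unfold gOk; rw [if_pos hy]
      rw [this, sub_self]
      exact Set.indicator_nonneg (fun _ _ => zero_le_one) _
    · have : gOk (gRel d ε) x y = 0 := by unfold gOk; rw [if_neg hy]
      rw [this, sub_zero, Set.indicator_of_mem]
      intro i _
      unfold gRel at hy
      rw [not_lt] at hy
      rw [Metric.mem_closedBall, dist_comm]
      refine le_trans ?_ hy
      unfold torusDist
      refine Real.le_sqrt_of_sq_le ?_
      exact Finset.single_le_sum (f := fun i => dist (x.1 i) (y.1 i) ^ 2) (fun j _ => sq_nonneg _) (Finset.mem_univ i)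
  have hmp : MeasurePreserving Prod.fst (gNu d) (volume : Measure (Torus d)) := by unfold gNu; exact measurePreserving_fst
  have hind : Measurable (S.indicator (fun _ => (1:ℝ))) := measurable_const.indicator hSm
  calc ∫ y, (1 - gOk (gRel d ε) x y) ∂(gNu d) ≤ ∫ y, (S.indicator (fun _ => (1:ℝ)) y.1) ∂(gNu d) := by
        refine integral_mono ?_ ?_ hle
        · exact gOk_integrable _ (gRel_meas d ε) x
        · exact hmp.integrable_comp_of_integrable ((integrable_const _).indicator hSm)
    _ = ∫ y, (S.indicator (fun _ => (1:ℝ)) y) := by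
        rw [← hmp.map_eq, integral_map measurable_fst.aemeasurable hind.aestronglyMeasurable]
    _ = volume.real S := by rw [integral_indicator_const _ hSm]; simp
    _ ≤ (2 * ε) ^ d := by
        rw [hS, Measure.real, volume_pi_pi]
        simp_rw [AddCircle.volume_closedBall]
        rw [Finset.prod_const, Finset.card_univ, Fintype.card_fin, ENNReal.toReal_pow]
        refine pow_le_pow_left₀ ENNReal.toReal_nonneg ?_ d
        refine ENNReal.toReal_le_of_le_ofReal (by positivity) (ENNReal.ofReal_le_ofReal (min_le_right _ _))

lemma gMean_eq (d : ℕ) {ε : ℝ} (hε : 0 < ε) {h : Phase d → ℝ} (hm : Measurable h) {B : ℝ} (hB : ∀ z, |h z| ≤ B) :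
    gceExp d ε (fun M W => empDens ε h M W) = gMean (gNu d) (gRel d ε) h (muBG d ε) := by
  have hc : 0 < muBG d ε := by unfold muBG; positivity
  unfold gceExp
  rw [partitionZ_eq]
  set c := muBG d ε with hcd
  have hs := gD_sum (gNu d) (gRel_meas d ε) (gRel_symm d ε) (lam := fun _ => c) (G := h) measurable_const hm
    (C := max c B) (fun _ => by rw [abs_of_pos hc]; exact le_max_left _ _) (fun x => (hB x).trans (le_max_right _ _))
  have e : gMean (gNu d) (gRel d ε) h c = (gZ (gNu d) (gRel d ε) fun _ => c)⁻¹ *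
      ∑' N : ℕ, ((N.factorial : ℝ))⁻¹ * gD (gNu d) (gRel d ε) (fun _ => c) h N := by
    rw [hs, ← integral_const_mul]
    unfold gMean gR
    congr 1; ext y; ring
  rw [e]
  congr 2; ext N
  have e1 : ∀ Z : Fin N → Phase d, exclInd ε (fun i => (Z i).1) * (∏ i, maxwellian (Z i).2) * empDens ε h N Z =
    (∏ i, maxwellian (Z i).2) • (gEx (gRel d ε) N Z * empDens ε h N Z) := fun Z => by
      rw [exclInd_eq, smul_eq_mul]; ring
  simp_rw [e1]
  rw [← gNu_pi_int d N (fun Z => gEx (gRel d ε) N Z * empDens ε h N Z), gD, div_eq_inv_mul, mul_assoc,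
    ← integral_const_mul]
  congr 2; ext Z
  rw [empDens, ← hcd]
  have e2 : ∀ i : Fin N, (∏ j ∈ Finset.univ.erase i, c) * h (Z i) = c ^ N * c⁻¹ * h (Z i) := by
    intro i
    rw [Finset.prod_const, Finset.card_erase_of_mem (Finset.mem_univ i), Finset.card_univ, Fintype.card_fin]
    congr 1
    have : N = (N - 1) + 1 := by have := i.2; omega
    conv_rhs => rw [this, pow_succ]
    field_simp
  simp_rw [e2]
  rw [← Finset.mul_sum]; ring

lemma fluct_eq (d : ℕ) {ε : ℝ} (hε : 0 < ε) {h : Phase d → ℝ} (hm : Measurable h) {B : ℝ} (hB : ∀ z, |h z| ≤ B)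
    (N : ℕ) (Z : Fin N → Phase d) :
    fluctField d ε h N Z = gX (gNu d) (gRel d ε) h (muBG d ε) N Z := by
  have hc : 0 < muBG d ε := by unfold muBG; positivity
  unfold fluctField gX
  rw [gMean_eq d hε hm hB, empDens]
  have h1 : √(muBG d ε) * (muBG d ε)⁻¹ = (√(muBG d ε))⁻¹ := by
    have h2 := Real.mul_self_sqrt hc.le
    have h3 : √(muBG d ε) ≠ 0 := (Real.sqrt_pos.2 hc).ne'
    nth_rewrite 2 [← h2]
    field_simp
  rw [mul_sub, ← mul_assoc, h1]

lemma gceExpC_eq (d : ℕ) {ε : ℝ} (hε : 0 < ε) {h : Phase d → ℝ} (hm : Measurable h) {B : ℝ} (hB : ∀ z, |h z| ≤ B)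
    (ξ : ℝ) : gceExpC d ε (fun N Z => Complex.exp (Complex.I * ξ * fluctField d ε h N Z)) =
      ∫ x : ℝ, Complex.exp (Complex.I * ξ * x) ∂(gP (gNu d) (gRel d ε) h (muBG d ε)) := by
  have hc : 0 < muBG d ε := by unfold muBG; positivity
  have := (gP_int (gNu d) (gRel_meas d ε) hm hB hc (f := fun x : ℝ => Complex.exp (Complex.I * ξ * x))
    (A := 0) (by fun_prop) le_rfl (fun x => by
      rw [mul_assoc, ← Complex.ofReal_mul, mul_comm, Complex.norm_exp_ofReal_mul_I]; simp)).2.tsum_eq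
  rw [← this]
  unfold gceExpC
  rw [partitionZ_eq, ← tsum_mul_left]
  congr 1; ext N
  have e1 : ∀ Z : Fin N → Phase d, ((exclInd ε (fun i => (Z i).1) * ∏ i, maxwellian (Z i).2 : ℝ) : ℂ) *
      Complex.exp (Complex.I * ξ * fluctField d ε h N Z) =
    (∏ i, maxwellian (Z i).2) • (gEx (gRel d ε) N Z •
      Complex.exp (Complex.I * ξ * gX (gNu d) (gRel d ε) h (muBG d ε) N Z)) := fun Z => by
      rw [exclInd_eq, fluct_eq d hε hm hB, Complex.real_smul, Complex.real_smul]; push_cast; ring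
  simp_rw [e1]
  rw [← gNu_pi_int d N (fun Z => gEx (gRel d ε) N Z •
      Complex.exp (Complex.I * ξ * gX (gNu d) (gRel d ε) h (muBG d ε) N Z)), Complex.real_smul]
  push_cast; ring

end Concrete

theorem static_clt (d : ℕ) (hd : 2 ≤ d) (h : Phase d → ℝ) (hm : Measurable h)
    (hb : ∃ B : ℝ, ∀ z, |h z| ≤ B) (ξ : ℝ) :
    Filter.Tendsto
      (fun ε : ℝ =>
        gceExpC d ε (fun N Z => Complex.exp (Complex.I * ξ * fluctField d ε h N Z)))
      (nhdsWithin 0 (Set.Ioi 0))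
      (nhds (Complex.exp (-(ξ : ℂ) ^ 2 *
        ((∫ z : Phase d, h z ^ 2 * maxwellian z.2 : ℝ) : ℂ) / 2))) := by
  obtain ⟨B, hB⟩ := hb
  have hB0 : 0 ≤ B := (abs_nonneg _).trans (hB 0)
  have ev : ∀ᶠ ε : ℝ in 𝓝[>] 0, 0 < ε := self_mem_nhdsWithin
  have hc : Tendsto (fun ε : ℝ => muBG d ε) (𝓝[>] 0) atTop := by
    unfold muBG
    refine Tendsto.inv_tendsto_nhdsGT_zero ?_
    refine tendsto_nhdsWithin_iff.2 ⟨?_, ?_⟩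
    · have : Tendsto (fun ε : ℝ => ε ^ (d - 1)) (𝓝 0) (𝓝 (0 ^ (d-1))) := (continuous_pow (d-1)).tendsto 0
      rw [zero_pow (by omega)] at this
      exact this.mono_left nhdsWithin_le_nhds
    · filter_upwards [ev] with ε hε
      exact pow_pos hε _
  have hcb : Tendsto (fun ε : ℝ => muBG d ε * (2 * ε) ^ d) (𝓝[>] 0) (𝓝 0) := by
    have : Tendsto (fun ε : ℝ => 2 ^ d * ε) (𝓝[>] 0) (𝓝 0) := by
      have h2 : Tendsto (fun ε : ℝ => 2 ^ d * ε) (𝓝 0) (𝓝 (2 ^ d * 0)) := (continuous_const_mul _).tendsto 0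
      rw [mul_zero] at h2
      exact h2.mono_left nhdsWithin_le_nhds
    refine this.congr' ?_
    filter_upwards [ev] with ε hε
    unfold muBG
    obtain ⟨k, rfl⟩ : ∃ k, d = k + 1 := ⟨d - 1, by omega⟩
    rw [Nat.add_sub_cancel, mul_pow, pow_succ ε]
    field_simp
  have key := gP_clt (gNu d) (l := 𝓝[>] (0:ℝ)) (gRel d) (muBG d) (fun ε => (2 * ε) ^ d) (gRel_meas d) (gRel_symm d)
    hm hB0 hB hc (by filter_upwards [ev] with ε hε; positivity)
    (by filter_upwards [ev] with ε hε; exact gExcl_bound d hε) hcb ξ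
  rw [gNu_int] at key
  refine key.congr' ?_
  filter_upwards [ev] with ε hε
  exact (gceExpC_eq d hε hm hB ξ).symm
end

section
/- (Static law of large numbers for the empirical density at equilibrium, equation (1.8) at a fixed time.) Let d ≥ 2 and let h : 𝕋^d × ℝ^d → ℝ be bounded measurable. Then for every δ > 0, ℙ^eq_ε( | π^ε(h) − ∫_{𝕋^d×ℝ^d} h(z) 𝓜(v) dz | > δ ) → 0 as ε → 0 (i.e. as μ_ε → ∞). -/
open MeasureTheory Real

namespace SLLN

lemma vol_univ_circle : (volume : Measure (AddCircle (1:ℝ))) Set.univ = 1 := by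
  rw [AddCircle.measure_univ]; simp

instance instProbC : IsProbabilityMeasure (volume : Measure (AddCircle (1:ℝ))) :=
  ⟨vol_univ_circle⟩

lemma vol_ball {d : ℕ} (x : Torus d) {ε : ℝ} (hε : 0 ≤ ε) :
    (volume : Measure (Torus d)).real (Metric.closedBall x ε) ≤ (2 * ε) ^ d := by
  have h : volume (Metric.closedBall x ε) ≤ ENNReal.ofReal ((2 * ε) ^ d) := by
    rw [MeasureTheory.volume_pi_closedBall x hε]
    calc _ ≤ ∏ i : Fin d, ENNReal.ofReal (2 * ε) := by
          refine Finset.prod_le_prod' fun i _ => ?_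
          rw [AddCircle.volume_closedBall]
          exact ENNReal.ofReal_le_ofReal (min_le_right _ _)
      _ = _ := by
          rw [Finset.prod_const, ENNReal.ofReal_pow (by positivity)]; simp
  exact ENNReal.toReal_le_of_le_ofReal (by positivity) h

lemma torusDist_lt {d : ℕ} {x y : Torus d} {ε : ℝ} (hε : 0 ≤ ε)
    (h : y ∉ Metric.closedBall x ε) : ε < torusDist x y := by
  rw [Metric.mem_closedBall, dist_comm, dist_pi_le_iff hε] at h
  push Not at h
  obtain ⟨i, hi⟩ := h
  refine hi.trans_le ?_
  unfold torusDist
  apply Real.le_sqrt_of_sq_le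
  exact Finset.single_le_sum (f := fun i => dist (x i) (y i) ^ 2)
    (fun i _ => sq_nonneg _) (Finset.mem_univ i)

lemma torusDist_comm {d : ℕ} (x y : Torus d) : torusDist x y = torusDist y x := by
  unfold torusDist; simp_rw [dist_comm]

lemma excl_nonneg {d : ℕ} (ε : ℝ) {N : ℕ} (X : Fin N → Torus d) : 0 ≤ exclInd ε X := by
  unfold exclInd; split_ifs <;> norm_num

lemma excl_le {d : ℕ} (ε : ℝ) {N : ℕ} (X : Fin N → Torus d) : exclInd ε X ≤ 1 := by
  unfold exclInd; split_ifs <;> norm_num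

lemma excl_meas {d : ℕ} (ε : ℝ) (N : ℕ) :
    Measurable (fun X : Fin N → Torus d => exclInd ε X) := by
  unfold exclInd
  refine Measurable.ite ?_ measurable_const measurable_const
  simp only [Set.ofPred_forall]
  refine MeasurableSet.iInter fun i => MeasurableSet.iInter fun j => MeasurableSet.iInter fun _ => ?_
  refine measurableSet_lt measurable_const ?_
  unfold torusDist
  refine Continuous.measurable ?_
  fun_prop

lemma excl_int {d : ℕ} (ε : ℝ) (N : ℕ) :
    Integrable (fun X : Fin N → Torus d => exclInd ε X) := by
  refine Integrable.of_bound (excl_meas ε N).aestronglyMeasurable 1 (ae_of_all _ fun X => ?_)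
  rw [Real.norm_eq_abs, abs_of_nonneg (excl_nonneg ε X)]; exact excl_le ε X

lemma excl_cons {d : ℕ} {ε : ℝ} (hε : 0 ≤ ε) {N : ℕ} (X : Fin N → Torus d) (x : Torus d) :
    exclInd ε X * (1 - ∑ i, (Metric.closedBall (X i) ε).indicator (fun _ => (1:ℝ)) x)
      ≤ exclInd ε (Fin.cons x X : Fin (N+1) → Torus d) := by
  by_cases hx : ∃ i, x ∈ Metric.closedBall (X i) ε
  · obtain ⟨i, hi⟩ := hx
    refine le_trans ?_ (excl_nonneg _ _)
    refine mul_nonpos_of_nonneg_of_nonpos (excl_nonneg _ _) ?_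
    have := Finset.single_le_sum
      (f := fun i => (Metric.closedBall (X i) ε).indicator (fun _ => (1:ℝ)) x)
      (fun i _ => Set.indicator_nonneg (fun _ _ => zero_le_one) _) (Finset.mem_univ i)
    simp only [Set.indicator_of_mem hi] at this
    linarith
  · push Not at hx
    have h0 : ∑ i, (Metric.closedBall (X i) ε).indicator (fun _ => (1:ℝ)) x = 0 :=
      Finset.sum_eq_zero fun i _ => Set.indicator_of_notMem (hx i) _
    rw [h0, sub_zero, mul_one]
    unfold exclInd
    split_ifs with h1 h2 h2
    · exact le_rfl
    · exfalso
      apply h2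
      intro i j
      refine Fin.cases ?_ (fun i => ?_) i <;> refine Fin.cases ?_ (fun j => ?_) j
      · simp
      · intro _; simp only [Fin.cons_zero, Fin.cons_succ]
        rw [torusDist_comm]; exact torusDist_lt hε (hx j)
      · intro _; simp only [Fin.cons_zero, Fin.cons_succ]
        exact torusDist_lt hε (hx i)
      · intro hij; simp only [Fin.cons_succ]
        exact h1 i j (fun h => hij (by rw [h]))
    · norm_num
    · norm_num

lemma Z_succ {d : ℕ} {ε : ℝ} (hε : 0 ≤ ε) (N : ℕ) :
    (∫ X : Fin N → Torus d, exclInd ε X) * (1 - N * (2 * ε) ^ d)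
      ≤ ∫ X : Fin (N+1) → Torus d, exclInd ε X := by
  have hp := MeasureTheory.volume_preserving_piFinSuccAbove (fun _ : Fin (N+1) => Torus d) 0
  have hs := hp.symm
  have e1 := hs.integral_comp' (fun X : Fin (N+1) → Torus d => exclInd ε X)
  have e2 : ∀ p : Torus d × (Fin N → Torus d),
      (MeasurableEquiv.piFinSuccAbove (fun _ : Fin (N+1) => Torus d) 0).symm p
        = Fin.cons p.1 p.2 := by
    intro p
    simp [MeasurableEquiv.piFinSuccAbove, Fin.insertNthEquiv, Fin.insertNth_zero']
  have i1 : Integrable (fun p : Torus d × (Fin N → Torus d) =>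
      exclInd ε (Fin.cons p.1 p.2 : Fin (N+1) → Torus d)) := by
    have := hs.integrable_comp_of_integrable (excl_int (d := d) ε (N+1))
    simpa only [Function.comp_def, e2] using this
  rw [← e1]
  simp_rw [e2]
  rw [Measure.volume_eq_prod, integral_prod_symm _ i1, ← integral_mul_const]
  refine integral_mono ((excl_int ε N).mul_const _) i1.integral_prod_right ?_
  intro X
  have hind : ∀ i, Integrable ((Metric.closedBall (X i) ε).indicator (fun _ : Torus d => (1:ℝ))) :=
    fun i => (integrable_const _).indicator Metric.isClosed_closedBall.measurableSet
  have i2 : Integrable (fun x : Torus d =>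
      exclInd ε X * (1 - ∑ i, (Metric.closedBall (X i) ε).indicator (fun _ => (1:ℝ)) x)) :=
    ((integrable_const _).sub (integrable_finsetSum _ fun i _ => hind i)).const_mul _
  have i3 : Integrable (fun x : Torus d => exclInd ε (Fin.cons x X : Fin (N+1) → Torus d)) := by
    refine Integrable.of_bound ?_ 1 (ae_of_all _ fun x => ?_)
    · refine ((excl_meas ε (N+1)).comp (g := fun X : Fin (N+1) → Torus d => exclInd ε X)
        (f := fun x : Torus d => (Fin.cons x X : Fin (N+1) → Torus d)) ?_).aestronglyMeasurable
      refine measurable_pi_lambda _ fun i => ?_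
      refine Fin.cases ?_ (fun i => ?_) i
      · exact measurable_id
      · simp
    · rw [Real.norm_eq_abs, abs_of_nonneg (excl_nonneg ε _)]; exact excl_le ε _
  refine le_trans ?_ (integral_mono i2 i3 fun x => excl_cons hε X x)
  rw [integral_const_mul, integral_sub (integrable_const _)
    (integrable_finsetSum _ fun i _ => hind i), integral_finsetSum _ fun i _ => hind i]
  refine mul_le_mul_of_nonneg_left ?_ (excl_nonneg _ _)
  simp only [integral_const, probReal_univ, smul_eq_mul, mul_one]
  refine sub_le_sub_left ?_ _
  calc _ ≤ ∑ i : Fin N, (2 * ε) ^ d := by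
        refine Finset.sum_le_sum fun i _ => ?_
        rw [integral_indicator_const _ Metric.isClosed_closedBall.measurableSet]
        simpa using vol_ball (X i) hε
    _ = _ := by simp

lemma Z_lower {d : ℕ} {ε : ℝ} (hε : 0 ≤ ε) {s : ℝ} (hs1 : s ≤ 1) (N : ℕ)
    (h : N * (2 * ε) ^ d ≤ s) :
    (1 - s) ^ N ≤ ∫ X : Fin N → Torus d, exclInd ε X := by
  induction N with
  | zero => simp [exclInd]
  | succ n ih =>
    have hq : (0:ℝ) ≤ (2 * ε) ^ d := by positivity
    push_cast at h
    have h' : n * (2 * ε) ^ d ≤ s := by nlinarith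
    refine le_trans ?_ (Z_succ hε n)
    rw [pow_succ]
    have : (1 - s) ≤ 1 - n * (2 * ε) ^ d := by linarith
    exact mul_le_mul (ih h') this (by linarith) (integral_nonneg fun X => excl_nonneg _ X)

lemma Z_le_one {d : ℕ} (ε : ℝ) (N : ℕ) : ∫ X : Fin N → Torus d, exclInd ε X ≤ 1 := by
  calc _ ≤ ∫ X : Fin N → Torus d, (1:ℝ) := integral_mono (excl_int ε N) (integrable_const _)
        (fun X => excl_le ε X)
    _ = 1 := by simp

lemma hasSum_exp (x : ℝ) : HasSum (fun N : ℕ => x ^ N / (Nat.factorial N : ℝ)) (Real.exp x) := by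
  rw [Real.exp_eq_exp_ℝ]
  exact NormedSpace.expSeries_div_hasSum_exp x

lemma partition_lower {d : ℕ} {ε : ℝ} (hε : 0 < ε) {s : ℝ} (hs1 : s ≤ 1)
    (hs0 : 0 ≤ s) (hs : 3 * muBG d ε * (2 * ε) ^ d ≤ s) :
    Real.exp (muBG d ε * (1 - s)) - 1 ≤ partitionZ d ε := by
  set μ := muBG d ε with hμ
  have hμ0 : 0 ≤ μ := by rw [hμ]; unfold muBG; positivity
  set μ' := μ * (1 - s) with hμ'
  have hμ'0 : 0 ≤ μ' := mul_nonneg hμ0 (by linarith)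
  have hμ'1 : μ' ≤ μ := by nlinarith
  have S1 := (hasSum_exp μ').sub ((hasSum_exp (μ' * Real.exp 1)).mul_left (Real.exp (-3 * μ)))
  have hS : Summable fun N : ℕ => μ ^ N / (Nat.factorial N : ℝ) *
      ∫ X : Fin N → Torus d, exclInd ε X := by
    refine Summable.of_nonneg_of_le (fun N => ?_) (fun N => ?_) (hasSum_exp μ).summable
    · exact mul_nonneg (by positivity) (integral_nonneg fun X => excl_nonneg _ X)
    · exact mul_le_of_le_one_right (by positivity) (Z_le_one ε N)
  have key := hasSum_le (fun N => ?_) S1 hS.hasSum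
  · refine le_trans ?_ key
    refine sub_le_sub_left ?_ _
    rw [← Real.exp_add]
    rw [Real.exp_le_one_iff]
    have := Real.exp_one_lt_d9
    nlinarith [Real.exp_pos 1]
  · have hN : Real.exp (-3 * μ) * ((μ' * Real.exp 1) ^ N / (Nat.factorial N : ℝ))
        = μ' ^ N / (Nat.factorial N : ℝ) * Real.exp (N - 3 * μ) := by
      rw [mul_pow, ← Real.exp_nat_mul, show (N:ℝ) - 3 * μ = -3 * μ + N * 1 by ring, Real.exp_add]
      ring
    rw [hN]
    have hI : 0 ≤ ∫ X : Fin N → Torus d, exclInd ε X := integral_nonneg fun X => excl_nonneg _ X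
    have hp : 0 ≤ μ' ^ N / (Nat.factorial N : ℝ) := by positivity
    by_cases hc : (N:ℝ) ≤ 3 * μ
    · have h1 := Z_lower (d := d) hε.le hs1 N
        (le_trans (mul_le_mul_of_nonneg_right hc (by positivity)) hs)
      calc _ ≤ μ' ^ N / (Nat.factorial N : ℝ) :=
            sub_le_self _ (mul_nonneg hp (Real.exp_pos _).le)
        _ = μ ^ N / (Nat.factorial N : ℝ) * (1 - s) ^ N := by rw [hμ', mul_pow]; ring
        _ ≤ _ := mul_le_mul_of_nonneg_left h1 (by positivity)
    · push Not at hc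
      have : 1 ≤ Real.exp (N - 3 * μ) := Real.one_le_exp (by linarith)
      refine le_trans (b := 0) ?_ (mul_nonneg (by positivity) hI)
      nlinarith

lemma int_prod {E : Type*} [MeasureSpace E] [SigmaFinite (volume : Measure E)] {N : ℕ}
    {f : E → ℝ} (hf : Integrable f) : Integrable (fun Z : Fin N → E => ∏ i, f (Z i)) :=
  Integrable.fintype_prod (f := fun _ : Fin N => f) (fun _ => hf)

lemma maxw_nonneg {d : ℕ} (v : EuclideanSpace ℝ (Fin d)) : 0 ≤ maxwellian v := by
  unfold maxwellian; positivity

lemma maxw_integral (d : ℕ) : ∫ v : EuclideanSpace ℝ (Fin d), maxwellian v = 1 := by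
  unfold maxwellian
  rw [integral_const_mul]
  have := GaussianFourier.integral_rexp_neg_mul_sq_norm
    (V := EuclideanSpace ℝ (Fin d)) (b := 1/2) (by norm_num)
  have e : ∀ v : EuclideanSpace ℝ (Fin d), -‖v‖ ^ 2 / 2 = -(1/2) * ‖v‖ ^ 2 := fun v => by ring
  simp_rw [e]
  rw [this, show π / (1/2) = 2 * π by ring, ← Real.rpow_add (by positivity)]
  simp [neg_div]

lemma maxw_int (d : ℕ) : Integrable (fun v : EuclideanSpace ℝ (Fin d) => maxwellian v) := by
  by_contra h
  have := integral_undef h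
  rw [maxw_integral] at this
  norm_num at this

lemma maxw_int' (d : ℕ) : Integrable (fun z : Phase d => maxwellian z.2) := by
  rw [Measure.volume_eq_prod]
  exact (maxw_int d).comp_snd (volume : Measure (Torus d))

lemma maxw_integral' (d : ℕ) : ∫ z : Phase d, maxwellian z.2 = 1 := by
  rw [Measure.volume_eq_prod]
  rw [integral_fun_snd (fun v : EuclideanSpace ℝ (Fin d) => maxwellian v), maxw_integral]
  simp

lemma bdd_int {d : ℕ} {h : Phase d → ℝ} (hm : Measurable h) {B : ℝ} (hb : ∀ z, |h z| ≤ B) :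
    Integrable (fun z : Phase d => h z * maxwellian z.2) :=
  (maxw_int' d).bdd_mul hm.aestronglyMeasurable (ae_of_all _ hb)

lemma exp_int {d : ℕ} {h : Phase d → ℝ} (hm : Measurable h) {B : ℝ} (hb : ∀ z, |h z| ≤ B) :
    Integrable (fun z : Phase d => Real.exp (h z) * maxwellian z.2) := by
  refine bdd_int (B := Real.exp B) hm.exp fun z => ?_
  rw [Real.abs_exp, Real.exp_le_exp]; exact (le_abs_self _).trans (hb z)

lemma laplace {d : ℕ} {g : Phase d → ℝ} (hm : Measurable g) {b : ℝ} (hb : ∀ z, |g z| ≤ b)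
    (hb1 : b ≤ 1) :
    ∫ z : Phase d, Real.exp (g z) * maxwellian z.2
      ≤ 1 + (∫ z : Phase d, g z * maxwellian z.2) + b ^ 2 := by
  have i0 := maxw_int' d
  have i1 := bdd_int hm hb
  have : 1 + (∫ z : Phase d, g z * maxwellian z.2) + b ^ 2
      = ∫ z : Phase d, (maxwellian z.2 + g z * maxwellian z.2) + b ^ 2 * maxwellian z.2 := by
    have i2 : Integrable (fun z : Phase d => maxwellian z.2 + g z * maxwellian z.2) := i0.add i1
    rw [integral_add i2 (i0.const_mul _), integral_add i0 i1, integral_const_mul,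
      maxw_integral', mul_one]
  rw [this]
  refine integral_mono (exp_int hm hb) ((i0.add i1).add (i0.const_mul _)) fun z => ?_
  have h1 := (abs_le.1 (Real.abs_exp_sub_one_sub_id_le ((hb z).trans hb1))).2
  have h2 : g z ^ 2 ≤ b ^ 2 := sq_le_sq' (by linarith [(abs_le.1 (hb z)).1]) (abs_le.1 (hb z)).2
  have h3 := maxw_nonneg z.2
  have : Real.exp (g z) ≤ 1 + g z + b ^ 2 := by linarith
  calc _ ≤ (1 + g z + b ^ 2) * maxwellian z.2 := mul_le_mul_of_nonneg_right this h3
    _ = _ := by ring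

lemma num_bound {d : ℕ} {ε : ℝ} (hε : 0 < ε) (F : (N : ℕ) → (Fin N → Phase d) → ℝ)
    (hF0 : ∀ N Z, 0 ≤ F N Z)
    {g : Phase d → ℝ} (hm : Measurable g) {b : ℝ} (hb : ∀ z, |g z| ≤ b) (hb1 : b ≤ 1)
    (m c : ℝ) (hmdef : m = ∫ z : Phase d, g z * maxwellian z.2) (hc : b ^ 2 ≤ c)
    (hF : ∀ N Z, F N Z ≤ Real.exp (∑ i, g (Z i) - muBG d ε * (m + 2 * c))
      + Real.exp (∑ i, - g (Z i) - muBG d ε * (- m + 2 * c))) :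
    ∑' N : ℕ, muBG d ε ^ N / (Nat.factorial N : ℝ) *
      ∫ Z : Fin N → Phase d,
        exclInd ε (fun i => (Z i).1) * (∏ i, maxwellian (Z i).2) * F N Z
      ≤ 2 * Real.exp (muBG d ε * (1 - c)) := by
  set μ := muBG d ε with hμ
  have hμ0 : 0 ≤ μ := by rw [hμ]; unfold muBG; positivity
  have hm' : Measurable fun z => - g z := hm.neg
  have hb' : ∀ z, |- g z| ≤ b := fun z => by rw [abs_neg]; exact hb z
  set A := ∫ z : Phase d, Real.exp (g z) * maxwellian z.2
  set A' := ∫ z : Phase d, Real.exp (-g z) * maxwellian z.2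
  have hA : A ≤ 1 + m + b ^ 2 := hmdef ▸ laplace hm hb hb1
  have hA' : A' ≤ 1 - m + b ^ 2 := by
    have := laplace hm' hb' hb1
    simp only [neg_mul, integral_neg] at this
    rw [hmdef]; linarith
  have I : ∀ N : ℕ, ∫ Z : Fin N → Phase d,
        exclInd ε (fun i => (Z i).1) * (∏ i, maxwellian (Z i).2) * F N Z
      ≤ Real.exp (-(μ * (m + 2 * c))) * A ^ N + Real.exp (-(μ * (-m + 2 * c))) * A' ^ N := by
    intro N
    have J1 : Integrable (fun Z : Fin N → Phase d => ∏ i, (Real.exp (g (Z i)) * maxwellian (Z i).2)) :=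
      int_prod (exp_int hm hb)
    have J2 : Integrable (fun Z : Fin N → Phase d => ∏ i, (Real.exp (-g (Z i)) * maxwellian (Z i).2)) :=
      int_prod (exp_int hm' hb')
    have E1 := integral_fintype_prod_volume_eq_pow (ι := Fin N)
      (fun z : Phase d => Real.exp (g z) * maxwellian z.2)
    have E2 := integral_fintype_prod_volume_eq_pow (ι := Fin N)
      (fun z : Phase d => Real.exp (-g z) * maxwellian z.2)
    rw [Fintype.card_fin] at E1 E2
    rw [← E1, ← E2, ← integral_const_mul, ← integral_const_mul,
      ← integral_add (J1.const_mul _) (J2.const_mul _)]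
    refine integral_mono_of_nonneg (ae_of_all _ fun Z => ?_)
      ((J1.const_mul _).add (J2.const_mul _)) (ae_of_all _ fun Z => ?_)
    · exact mul_nonneg (mul_nonneg (excl_nonneg _ _)
        (Finset.prod_nonneg fun i _ => maxw_nonneg _)) (hF0 _ _)
    · have hP : 0 ≤ ∏ i, maxwellian (Z i).2 := Finset.prod_nonneg fun i _ => maxw_nonneg _
      calc exclInd ε (fun i => (Z i).1) * (∏ i, maxwellian (Z i).2) * F N Z
          ≤ (1 * ∏ i, maxwellian (Z i).2) * F N Z :=
            mul_le_mul_of_nonneg_right (mul_le_mul_of_nonneg_right (excl_le _ _) hP) (hF0 _ _)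
        _ ≤ (1 * ∏ i, maxwellian (Z i).2) * _ :=
            mul_le_mul_of_nonneg_left (hF N Z) (by rwa [one_mul])
        _ = _ := by
            beta_reduce
            rw [Finset.prod_mul_distrib, Finset.prod_mul_distrib, ← Real.exp_sum, ← Real.exp_sum,
              sub_eq_add_neg, sub_eq_add_neg, Real.exp_add, Real.exp_add]
            ring
  have H := ((hasSum_exp (μ * A)).mul_left (Real.exp (-(μ * (m + 2 * c))))).add
    ((hasSum_exp (μ * A')).mul_left (Real.exp (-(μ * (-m + 2 * c)))))
  have T : ∀ N : ℕ, μ ^ N / (Nat.factorial N : ℝ) *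
      (∫ Z : Fin N → Phase d,
        exclInd ε (fun i => (Z i).1) * (∏ i, maxwellian (Z i).2) * F N Z) ≤
      Real.exp (-(μ * (m + 2 * c))) * ((μ * A) ^ N / (Nat.factorial N : ℝ)) +
      Real.exp (-(μ * (-m + 2 * c))) * ((μ * A') ^ N / (Nat.factorial N : ℝ)) := by
    intro N
    refine (mul_le_mul_of_nonneg_left (I N) (by positivity)).trans (le_of_eq ?_)
    rw [mul_pow, mul_pow]; ring
  have hs : Summable fun N : ℕ => μ ^ N / (Nat.factorial N : ℝ) *
      (∫ Z : Fin N → Phase d,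
        exclInd ε (fun i => (Z i).1) * (∏ i, maxwellian (Z i).2) * F N Z) :=
    Summable.of_nonneg_of_le (fun N => mul_nonneg (by positivity) (integral_nonneg fun Z =>
      mul_nonneg (mul_nonneg (excl_nonneg _ _)
        (Finset.prod_nonneg fun i _ => maxw_nonneg _)) (hF0 _ _))) T H.summable
  refine (hasSum_le T hs.hasSum H).trans ?_
  rw [← Real.exp_add, ← Real.exp_add, two_mul (Real.exp _)]
  refine add_le_add (Real.exp_le_exp.2 ?_) (Real.exp_le_exp.2 ?_)
  · nlinarith
  · nlinarith

lemma mu_tendsto {d : ℕ} (hd : 2 ≤ d) :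
    Filter.Tendsto (muBG d) (nhdsWithin 0 (Set.Ioi 0)) Filter.atTop := by
  unfold muBG
  refine tendsto_inv_nhdsGT_zero.comp ?_
  refine tendsto_nhdsWithin_iff.2 ⟨?_, ?_⟩
  · have : Filter.Tendsto (fun ε : ℝ => ε ^ (d-1)) (nhds 0) (nhds (0 ^ (d-1))) :=
      (continuous_pow (d-1)).tendsto 0
    rw [zero_pow (by omega)] at this
    exact this.mono_left nhdsWithin_le_nhds
  · filter_upwards [self_mem_nhdsWithin] with ε hε
    exact pow_pos (Set.mem_Ioi.1 hε) _

end SLLN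

/- Static law of large numbers for the empirical density at equilibrium: for every
bounded measurable `h` and every `δ > 0`,
`ℙ^eq_ε(|π^ε(h) - ∫ h 𝓜 dz| > δ) → 0` as `ε → 0⁺` (the probability being written as the
equilibrium expectation of the indicator of the event). -/
open Classical in
theorem static_lln (d : ℕ) (hd : 2 ≤ d) (h : Phase d → ℝ) (hm : Measurable h)
    (hb : ∃ B : ℝ, ∀ z, |h z| ≤ B) (δ : ℝ) (hδ : 0 < δ) :
    Filter.Tendsto
      (fun ε : ℝ =>
        gceExp d ε (fun N Z =>
          if δ < |empDens ε h N Z - ∫ z : Phase d, h z * maxwellian z.2| then 1 else 0))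
      (nhdsWithin 0 (Set.Ioi 0)) (nhds 0) := by
  obtain ⟨B₀, hB₀⟩ := hb
  set B := max B₀ 1 with hB
  have hB1 : 1 ≤ B := le_max_right _ _
  have hbB : ∀ z, |h z| ≤ B := fun z => (hB₀ z).trans (le_max_left _ _)
  set m := ∫ z : Phase d, h z * maxwellian z.2 with hmdef
  obtain ⟨l, hl0, hl1, hl2⟩ : ∃ l : ℝ, 0 < l ∧ l * B ≤ 1 ∧ (l * B) ^ 2 ≤ l * δ / 2 := by
    refine ⟨min (1 / B) (δ / (2 * B ^ 2)), by positivity, ?_, ?_⟩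
    · calc _ ≤ 1 / B * B := mul_le_mul_of_nonneg_right (min_le_left _ _) (by positivity)
        _ = 1 := by field_simp
    · set l := min (1 / B) (δ / (2 * B ^ 2)) with hl
      have h0 : 0 < l := by rw [hl]; positivity
      have h1 : l * B ^ 2 ≤ δ / 2 := by
        calc _ ≤ δ / (2 * B ^ 2) * B ^ 2 := mul_le_mul_of_nonneg_right (min_le_right _ _) (by positivity)
          _ = δ / 2 := by field_simp
      nlinarith
  set c := l * δ / 2 with hc
  have hc0 : 0 < c := by positivity
  have hmu := SLLN.mu_tendsto hd
  have hlim : Filter.Tendsto (fun ε => 4 * Real.exp (-(muBG d ε * (c / 2))))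
      (nhdsWithin 0 (Set.Ioi 0)) (nhds 0) := by
    have := (Real.tendsto_exp_neg_atTop_nhds_zero.comp
      (hmu.atTop_mul_const (half_pos hc0))).const_mul 4
    simpa [Function.comp_def] using this
  have hsmall : ∀ᶠ ε : ℝ in nhdsWithin 0 (Set.Ioi 0), 3 * 2 ^ d * ε < min (c / 2) (1 / 2) := by
    have : Filter.Tendsto (fun ε : ℝ => 3 * 2 ^ d * ε) (nhds 0) (nhds (3 * 2 ^ d * 0)) :=
      (continuous_const.mul continuous_id).tendsto 0
    rw [mul_zero] at this
    exact (this.mono_left nhdsWithin_le_nhds).eventually (gt_mem_nhds (by positivity))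
  have hnum0 : ∀ ε : ℝ, ∀ N Z, (0:ℝ) ≤ (if δ < |empDens ε h N Z - m| then (1:ℝ) else 0) := by
    intro ε N Z; split_ifs <;> norm_num
  refine tendsto_of_tendsto_of_tendsto_of_le_of_le' tendsto_const_nhds hlim ?_ ?_
  · filter_upwards [self_mem_nhdsWithin] with ε hε
    have hμ0 : 0 ≤ muBG d ε := by
      have : 0 < ε := hε
      unfold muBG; positivity
    unfold gceExp partitionZ
    refine mul_nonneg (inv_nonneg.2 (tsum_nonneg fun N => mul_nonneg (by positivity)
      (integral_nonneg fun X => SLLN.excl_nonneg _ X))) (tsum_nonneg fun N =>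
      mul_nonneg (by positivity) (integral_nonneg fun Z => ?_))
    exact mul_nonneg (mul_nonneg (SLLN.excl_nonneg _ _)
        (Finset.prod_nonneg fun i _ => SLLN.maxw_nonneg _)) (hnum0 _ _ _)
  · filter_upwards [self_mem_nhdsWithin, hsmall, hmu.eventually_ge_atTop 2] with ε hε hs hμ2
    have hε : 0 < ε := hε
    have hs1 := lt_min_iff.1 hs
    set s := 3 * 2 ^ d * ε with hsdef
    have hs0 : 0 ≤ s := by positivity
    have hμe : 3 * muBG d ε * (2 * ε) ^ d ≤ s := by
      obtain ⟨k, rfl⟩ : ∃ k, d = k + 1 := ⟨d - 1, by omega⟩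
      unfold muBG
      rw [hsdef, Nat.add_sub_cancel, mul_pow, pow_succ ε]
      refine le_of_eq ?_
      field_simp
    have hZ := SLLN.partition_lower (d := d) hε (by linarith) hs0 hμe
    have hb2 : ∀ z, |l * h z| ≤ l * B := fun z => by
      rw [abs_mul, abs_of_pos hl0]; exact mul_le_mul_of_nonneg_left (hbB z) hl0.le
    have hN := SLLN.num_bound hε
      (fun N Z => if δ < |empDens ε h N Z - m| then (1:ℝ) else 0) (hnum0 ε)
      (g := fun z => l * h z) (hm.const_mul l) hb2 hl1 (l * m) c
      (by rw [hmdef, ← integral_const_mul]; simp_rw [mul_assoc]) hl2 ?_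
    · unfold gceExp
      set μ := muBG d ε
      have hexp : 2 ≤ Real.exp (μ * (1 - s)) := by
        have := Real.add_one_le_exp (μ * (1 - s))
        nlinarith
      have hZ2 : Real.exp (μ * (1 - s)) / 2 ≤ partitionZ d ε := by linarith
      have hp : 0 < Real.exp (μ * (1 - s)) / 2 := by positivity
      calc _ ≤ (partitionZ d ε)⁻¹ * (2 * Real.exp (μ * (1 - c))) :=
            mul_le_mul_of_nonneg_left hN (inv_nonneg.2 (hp.le.trans hZ2))
        _ ≤ (Real.exp (μ * (1 - s)) / 2)⁻¹ * (2 * Real.exp (μ * (1 - c))) :=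
            mul_le_mul_of_nonneg_right (inv_anti₀ hp hZ2) (by positivity)
        _ = 4 * Real.exp (μ * (1 - c) - μ * (1 - s)) := by
            rw [Real.exp_sub]; field_simp; norm_num
        _ ≤ _ := by
            refine mul_le_mul_of_nonneg_left (Real.exp_le_exp.2 ?_) (by norm_num)
            nlinarith
    · intro N Z
      have hμ : 0 < muBG d ε := by linarith
      split_ifs with hcase
      · have hS : ∑ i, h (Z i) = muBG d ε * empDens ε h N Z := by
          unfold empDens; field_simp
        rw [Finset.sum_neg_distrib, ← Finset.mul_sum, hS]
        rcases lt_abs.1 hcase with h1 | h1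
        · have : 1 ≤ Real.exp (l * (muBG d ε * empDens ε h N Z) - muBG d ε * (l * m + 2 * c)) := by
            refine Real.one_le_exp ?_
            have : 0 ≤ (l * muBG d ε) * (empDens ε h N Z - m - δ) :=
              mul_nonneg (by positivity) (by linarith)
            rw [hc]; linarith
          exact this.trans (le_add_of_nonneg_right (Real.exp_pos _).le)
        · have : 1 ≤ Real.exp (-(l * (muBG d ε * empDens ε h N Z))
              - muBG d ε * (-(l * m) + 2 * c)) := by
            refine Real.one_le_exp ?_
            have : 0 ≤ (l * muBG d ε) * (-(empDens ε h N Z - m) - δ) :=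
              mul_nonneg (by positivity) (by linarith)
            rw [hc]; linarith
          exact this.trans (le_add_of_nonneg_left (Real.exp_pos _).le)
      · positivity
end
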